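/- Let G be the graph with vertex set {1,…,9} and edge set {{1,2},{2,3},{2,5},{3,4},{4,5},{3,6},{5,7},{6,7},{6,8},{7,9}}. Then 𝒞(G) = {∅, {2}, {6}, {7}, {2,6}, {2,7}, {3,5}, {3,7}, {5,6}, {6,7}, {2,3,7}, {2,4,6}, {2,4,7}, {2,5,6}, {2,6,7}, {3,5,6}, {3,5,7}, {2,4,6,7}}, the ideal J_G is unmixed of deviation 2 with dim S/J_G = 10 and depth S/J_G = 9; in particular S/J_G is not Cohen–Macaulay. -/

import Mathlib

open MvPolynomial

noncomputable section

/-- The binomial edge ideal of a simple graph `G` on vertex type `V`, inside the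
polynomial ring `K[x_i, y_i : i ∈ V]`, modelled as `MvPolynomial (V ⊕ V) K`
with `x_i = X (Sum.inl i)` and `y_i = X (Sum.inr i)`. -/
def binomialEdgeIdeal (K : Type*) [Field K] {V : Type*} (G : SimpleGraph V) :
    Ideal (MvPolynomial (V ⊕ V) K) :=
  Ideal.span { f | ∃ i j : V, G.Adj i j ∧
    f = X (Sum.inl i) * X (Sum.inr j) - X (Sum.inl j) * X (Sum.inr i) }

/-- The minimal number of generators of an ideal. -/
def mu {R : Type*} [CommRing R] (J : Ideal R) : ℕ :=
  sInf {k | ∃ s : Finset R, s.card = k ∧ Ideal.span (s : Set R) = J}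

/-- The height of an ideal: the infimum of the heights of the primes containing it. -/
def htI {R : Type*} [CommRing R] (I : Ideal R) : ℕ∞ :=
  ⨅ (P : PrimeSpectrum R) (_ : I ≤ P.asIdeal), Order.height P

/-- An ideal is unmixed if all of its minimal primes have height equal to its height. -/
def IsUnmixed {R : Type*} [CommRing R] (I : Ideal R) : Prop :=
  ∀ P ∈ I.minimalPrimes, htI P = htI I

/-- The depth of a ring `R` with respect to an ideal `m`: the supremum of the
lengths of regular sequences on `R` consisting of elements of `m`. -/
def ringDepth (R : Type*) [CommRing R] (m : Ideal R) : ℕ∞ :=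
  sSup {d : ℕ∞ | ∃ l : List R, (l.length : ℕ∞) = d ∧ (∀ x ∈ l, x ∈ m) ∧
    RingTheory.Sequence.IsRegular R l}

/-- The graded maximal ideal of the quotient of a polynomial ring by an ideal `J`:
the image of the ideal generated by all the variables. -/
def gradedMaxQuot {K σ : Type*} [Field K] (J : Ideal (MvPolynomial σ K)) :
    Ideal (MvPolynomial σ K ⧸ J) :=
  (Ideal.span (Set.range (X : σ → MvPolynomial σ K))).map (Ideal.Quotient.mk J)

/-- `S/J` is Cohen–Macaulay: its depth with respect to the graded maximal ideal
equals its Krull dimension. -/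
def IsCMQuot {K σ : Type*} [Field K] (J : Ideal (MvPolynomial σ K)) : Prop :=
  (ringDepth (MvPolynomial σ K ⧸ J) (gradedMaxQuot J) : WithBot ℕ∞) =
    ringKrullDim (MvPolynomial σ K ⧸ J)

/-- A graph is a path graph if its vertices can be ordered `v_1, …, v_m` so that
its edges are exactly `{v_i, v_{i+1}}` for `1 ≤ i ≤ m - 1`. -/
def IsPathGraph {V : Type*} (H : SimpleGraph V) : Prop :=
  ∃ (m : ℕ) (e : V ≃ Fin m), ∀ a b : V,
    H.Adj a b ↔ ((e a : ℕ) + 1 = (e b : ℕ) ∨ (e b : ℕ) + 1 = (e a : ℕ))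

/-- The vertex set of a connected component, as a set of vertices. -/
def compSupp {V : Type*} (G : SimpleGraph V) (c : G.ConnectedComponent) : Set V :=
  {v | G.connectedComponentMk v = c}

end

noncomputable section

/-- The prime `P_T(G)` associated with a subset `T` of the vertices: it is generated
by the variables `x_i, y_i` for `i ∈ T` together with the binomial edge ideals of the
complete graphs on the connected components of the subgraph of `G` induced on the
complement of `T` (i.e. all `2`-minors `x_i y_j - x_j y_i` for distinct vertices
`i, j ∉ T` lying in the same connected component of that induced subgraph). -/
def PTIdeal (K : Type*) [Field K] {n : ℕ} (G : SimpleGraph (Fin n)) (T : Set (Fin n)) :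
    Ideal (MvPolynomial (Fin n ⊕ Fin n) K) :=
  Ideal.span
    ({ f | ∃ i ∈ T, f = X (Sum.inl i) } ∪ { f | ∃ i ∈ T, f = X (Sum.inr i) } ∪
      { f | ∃ (i j : Fin n) (hi : i ∈ Tᶜ) (hj : j ∈ Tᶜ), i ≠ j ∧
        (G.induce Tᶜ).Reachable ⟨i, hi⟩ ⟨j, hj⟩ ∧
        f = X (Sum.inl i) * X (Sum.inr j) - X (Sum.inl j) * X (Sum.inr i) })

/-- The number of connected components of the subgraph of `G` induced on `U`. -/
def cNum {n : ℕ} (G : SimpleGraph (Fin n)) (U : Set (Fin n)) : ℕ :=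
  Nat.card (G.induce U).ConnectedComponent

/-- `T` has the cutpoint property for `G`: every `i ∈ T` is a cutpoint of the
subgraph of `G` induced on `([n] ∖ T) ∪ {i}`, i.e. removing `i` from that graph
increases the number of connected components. -/
def HasCutpointProperty {n : ℕ} (G : SimpleGraph (Fin n)) (T : Set (Fin n)) : Prop :=
  ∀ i ∈ T, cNum G (Tᶜ ∪ {i}) < cNum G Tᶜ

/-- The graph with vertex set `{1,…,9}` (modelled as `Fin 9`, vertex `i`
corresponding to `i - 1`) and edge set
`{{1,2},{2,3},{2,5},{3,4},{4,5},{3,6},{5,7},{6,7},{6,8},{7,9}}`. -/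
def nineVertexExample : SimpleGraph (Fin 9) :=
  SimpleGraph.fromRel (fun a b =>
    (a, b) ∈ ([(0, 1), (1, 2), (1, 4), (2, 3), (3, 4), (2, 5), (4, 6), (5, 6),
      (5, 7), (6, 8)] : List (Fin 9 × Fin 9)))

/-!
The minimal primes of `J_G` are the primes `P_T` with `T ∈ 𝒞(G)`, and `P_T` has height
`n + |T| - c(T)`, where `c(T)` is the number of components of `G - T`. Here `c(T) = |T| + 1` for
all `T ∈ 𝒞(G)`, so every component of `V(J_G)` has codimension `8` and dimension `10`. The ten edge
binomials are linearly independent quadrics, so none of them is redundant.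

The depth is at most `9` by a connectedness argument: along `V(P_∅) ∩ V(P_{3,5})`, whose dimension
is `8`, only the two components `V(P_∅)` and `V(P_{3,5})` meet, which depth `10` would forbid. It is
at least `9` because `J_G` is the intersection of the edge ideal of the graph completed at a vertex
`v` and the ideal of `G - v` together with `x_v, y_v`; the depth lemma and induction reduce the
bound to disjoint unions of cliques, whose ideals are Cohen–Macaulay.
-/

section Depth

open CategoryTheory Abelian RingTheory.Sequence

universe u

variable {R : Type u} [CommRing R]

/-- The groups `Ext^i(R/m, M)` vanish for all `i < k`. By Rees' theorem this says, for a finitely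
generated module `M ≠ m M` over a noetherian ring, that the depth of `M` with respect to `m` is at
least `k`; the homological form is the one that behaves well along short exact sequences. -/
def DepthGE (m : Ideal R) (k : ℕ) (M : Type u) [AddCommGroup M] [Module R M] : Prop :=
  ∀ i < k, Subsingleton (Ext (ModuleCat.of R (R ⧸ m)) (ModuleCat.of R M) i)

theorem shortExact_shortComplexOfCompEqZero {M₁ M₂ M₃ : Type u} [AddCommGroup M₁] [Module R M₁]
    [AddCommGroup M₂] [Module R M₂] [AddCommGroup M₃] [Module R M₃] {f : M₁ →ₗ[R] M₂}
    {g : M₂ →ₗ[R] M₃} (hf : Function.Injective f) (hg : Function.Surjective g)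
    (hfg : Function.Exact f g) :
    (ModuleCat.shortComplexOfCompEqZero f g hfg.linearMap_comp_eq_zero).ShortExact where
  exact := ModuleCat.shortComplex_exact _ hfg
  mono_f := (ModuleCat.mono_iff_injective _).mpr hf
  epi_g := (ModuleCat.epi_iff_surjective _).mpr hg

theorem ext_comp_smul_id_eq_zero {N L : ModuleCat.{u} R} {x : R}
    (hx : x ∈ Module.annihilator R N) {i : ℕ} (a : Ext N L i) :
    a.comp (Ext.mk₀ (x • 𝟙 L)) (add_zero i) = 0 := by
  have hN : x • 𝟙 N = 0 := by
    simp [← ModuleCat.lsmul_eq_smul_id, Module.mem_annihilator_iff_lsmul_eq_zero.mp hx]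
  have hsmul : x • a = (Ext.mk₀ (x • 𝟙 N)).comp a (zero_add i) := by simp [Ext.mk₀_smul]
  simp [Ext.mk₀_smul, hN, hsmul]

theorem exact_smul_id_factor (I : Ideal R) (x : R) :
    Function.Exact (x • LinearMap.id : (R ⧸ I) →ₗ[R] R ⧸ I)
      (Submodule.factor (le_sup_left : I ≤ I ⊔ Ideal.span {x})) := by
  intro a
  obtain ⟨a, rfl⟩ := Ideal.Quotient.mk_surjective a
  change Ideal.Quotient.mk _ a = 0 ↔ _
  rw [Ideal.Quotient.eq_zero_iff_mem]
  constructor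
  · intro h
    obtain ⟨p, hp, q, hq, hpq⟩ := Submodule.mem_sup.mp h
    obtain ⟨c, rfl⟩ := Ideal.mem_span_singleton'.mp hq
    refine ⟨Ideal.Quotient.mk _ c, Ideal.Quotient.eq.mpr ?_⟩
    change x * c - a ∈ I
    rw [show x * c - a = -p by linear_combination hpq]
    exact neg_mem hp
  · rintro ⟨c, hc⟩
    obtain ⟨c, rfl⟩ := Ideal.Quotient.mk_surjective c
    have hxc : x * c - a ∈ I := Ideal.Quotient.eq.mp hc
    rw [show a = c * x - (x * c - a) by ring]
    exact sub_mem (Ideal.mem_sup_right (Ideal.mul_mem_left _ _ (Ideal.mem_span_singleton_self x)))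
      (Ideal.mem_sup_left hxc)

theorem exact_prod_factor_coprod_factor (A B : Ideal R) :
    Function.Exact
      ((Submodule.factor inf_le_left).prod (Submodule.factor inf_le_right) :
        (R ⧸ A ⊓ B) →ₗ[R] (R ⧸ A) × (R ⧸ B))
      ((Submodule.factor le_sup_left).coprod (-Submodule.factor le_sup_right) :
        (R ⧸ A) × (R ⧸ B) →ₗ[R] R ⧸ A ⊔ B) := by
  rintro ⟨a, b⟩
  obtain ⟨a, rfl⟩ := Ideal.Quotient.mk_surjective a
  obtain ⟨b, rfl⟩ := Ideal.Quotient.mk_surjective b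
  rw [LinearMap.coprod_apply, LinearMap.neg_apply, ← sub_eq_add_neg]
  change Ideal.Quotient.mk (A ⊔ B) (a - b) = 0 ↔ _
  rw [Ideal.Quotient.eq_zero_iff_mem]
  constructor
  · intro h
    obtain ⟨p, hp, q, hq, hpq⟩ := Submodule.mem_sup.mp h
    refine ⟨Ideal.Quotient.mk _ (a - p), Prod.ext ?_ ?_⟩
    · exact Ideal.Quotient.eq.mpr (by simpa using hp)
    · refine Ideal.Quotient.eq.mpr ?_
      change a - p - b ∈ B
      rwa [show a - p - b = q by linear_combination -hpq]
  · rintro ⟨c, hc⟩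
    obtain ⟨c, rfl⟩ := Ideal.Quotient.mk_surjective c
    have hca : c - a ∈ A := Ideal.Quotient.eq.mp (Prod.ext_iff.mp hc).1
    have hcb : c - b ∈ B := Ideal.Quotient.eq.mp (Prod.ext_iff.mp hc).2
    rw [show a - b = (c - b) - (c - a) by ring]
    exact sub_mem (Ideal.mem_sup_right hcb) (Ideal.mem_sup_left hca)

theorem smul_top_quotient_lt_top {m I : Ideal R} (hI : I ≤ m) (hm : m ≠ ⊤) :
    m • (⊤ : Submodule R (R ⧸ I)) < ⊤ := by
  rw [lt_top_iff_ne_top]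
  intro h
  have hle : m • (⊤ : Submodule R (R ⧸ I)) ≤ Submodule.map I.mkQ m := by
    refine Submodule.smul_le.mpr fun r hr n _ ↦ ?_
    obtain ⟨n, rfl⟩ := Submodule.mkQ_surjective I n
    exact ⟨r * n, Ideal.mul_mem_right _ _ hr, rfl⟩
  rw [h, top_le_iff] at hle
  have hcomap := congrArg (Submodule.comap I.mkQ) hle
  rw [Submodule.comap_map_mkQ, Submodule.comap_top, sup_eq_right.mpr hI] at hcomap
  exact hm hcomap

theorem support_quotient_eq_zeroLocus (m : Ideal R) :
    Module.support R (R ⧸ m) = PrimeSpectrum.zeroLocus (m : Set R) := by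
  rw [Module.support_eq_zeroLocus, Ideal.annihilator_quotient]

namespace DepthGE

variable {m : Ideal R} {k l : ℕ} {M M₁ M₂ M₃ : Type u} [AddCommGroup M] [Module R M]
  [AddCommGroup M₁] [Module R M₁] [AddCommGroup M₂] [Module R M₂] [AddCommGroup M₃] [Module R M₃]

theorem mono (h : DepthGE m k M) (hl : l ≤ k) : DepthGE m l M :=
  fun i hi ↦ h i (hi.trans_le hl)

theorem zero : DepthGE m 0 M := fun _ hi ↦ absurd hi (Nat.not_lt_zero _)

theorem left {f : M₁ →ₗ[R] M₂} {g : M₂ →ₗ[R] M₃} (hf : Function.Injective f)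
    (hg : Function.Surjective g) (hfg : Function.Exact f g) (h₂ : DepthGE m (k + 1) M₂)
    (h₃ : DepthGE m k M₃) : DepthGE m (k + 1) M₁ := by
  intro i hi
  have hS := shortExact_shortComplexOfCompEqZero hf hg hfg
  refine subsingleton_of_forall_eq 0 fun x ↦ ?_
  have := h₂ i hi
  cases i with
  | zero =>
    have := hS.mono_f
    exact Ext.postcomp_mk₀_injective_of_mono (ModuleCat.of R (R ⧸ m)) (ModuleCat.ofHom f)
      (Subsingleton.elim (α := Ext (ModuleCat.of R (R ⧸ m)) (ModuleCat.of R M₂) 0) _ _)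
  | succ i =>
    have := h₃ i (by omega)
    obtain ⟨y, rfl⟩ := Ext.covariant_sequence_exact₁ _ hS x
      (Subsingleton.elim (α := Ext (ModuleCat.of R (R ⧸ m)) (ModuleCat.of R M₂) (i + 1)) _ _) rfl
    rw [Subsingleton.elim (α := Ext (ModuleCat.of R (R ⧸ m)) (ModuleCat.of R M₃) i) y 0,
      Ext.zero_comp]

theorem middle {f : M₁ →ₗ[R] M₂} {g : M₂ →ₗ[R] M₃} (hf : Function.Injective f)
    (hg : Function.Surjective g) (hfg : Function.Exact f g) (h₁ : DepthGE m k M₁)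
    (h₃ : DepthGE m k M₃) : DepthGE m k M₂ := by
  intro i hi
  have hS := shortExact_shortComplexOfCompEqZero hf hg hfg
  refine subsingleton_of_forall_eq 0 fun x ↦ ?_
  have := h₁ i hi
  have := h₃ i hi
  obtain ⟨y, rfl⟩ := Ext.covariant_sequence_exact₂ _ hS x
    (Subsingleton.elim (α := Ext (ModuleCat.of R (R ⧸ m)) (ModuleCat.of R M₃) i) _ _)
  rw [Subsingleton.elim (α := Ext (ModuleCat.of R (R ⧸ m)) (ModuleCat.of R M₁) i) y 0,
    Ext.zero_comp]

theorem right {f : M₁ →ₗ[R] M₂} {g : M₂ →ₗ[R] M₃} (hf : Function.Injective f)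
    (hg : Function.Surjective g) (hfg : Function.Exact f g) (h₁ : DepthGE m (k + 1) M₁)
    (h₂ : DepthGE m k M₂) : DepthGE m k M₃ := by
  intro i hi
  have hS := shortExact_shortComplexOfCompEqZero hf hg hfg
  refine subsingleton_of_forall_eq 0 fun x ↦ ?_
  have := h₁ (i + 1) (by omega)
  have := h₂ i hi
  obtain ⟨y, rfl⟩ := Ext.covariant_sequence_exact₃ _ hS x rfl
    (Subsingleton.elim (α := Ext (ModuleCat.of R (R ⧸ m)) (ModuleCat.of R M₁) (i + 1)) _ _)
  rw [Subsingleton.elim (α := Ext (ModuleCat.of R (R ⧸ m)) (ModuleCat.of R M₂) i) y 0,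
    Ext.zero_comp]

theorem of_isSMulRegular {x : R} (hxm : x ∈ m) (hx : IsSMulRegular M x) {g : M →ₗ[R] M₃}
    (hg : Function.Surjective g) (hxg : Function.Exact (x • LinearMap.id : M →ₗ[R] M) g)
    (h₃ : DepthGE m k M₃) : DepthGE m (k + 1) M := by
  intro i hi
  have hS := shortExact_shortComplexOfCompEqZero (fun _ _ h ↦ hx h) hg hxg
  refine subsingleton_of_forall_eq 0 fun a ↦ ?_
  have hann : x ∈ Module.annihilator R (R ⧸ m) := by rwa [Ideal.annihilator_quotient]
  have hzero : a.comp (Ext.mk₀ (ModuleCat.ofHom (x • LinearMap.id : M →ₗ[R] M))) (add_zero i) = 0 :=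
    ext_comp_smul_id_eq_zero (N := ModuleCat.of R (R ⧸ m)) hann a
  cases i with
  | zero =>
    have := hS.mono_f
    refine Ext.postcomp_mk₀_injective_of_mono (ModuleCat.of R (R ⧸ m))
      (ModuleCat.ofHom (x • LinearMap.id : M →ₗ[R] M)) ?_
    rw [map_zero]
    exact hzero
  | succ i =>
    have := h₃ i (by omega)
    obtain ⟨y, rfl⟩ := Ext.covariant_sequence_exact₁ _ hS a hzero rfl
    rw [Subsingleton.elim (α := Ext (ModuleCat.of R (R ⧸ m)) (ModuleCat.of R M₃) i) y 0,
      Ext.zero_comp]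

theorem prod (h₁ : DepthGE m k M₁) (h₂ : DepthGE m k M₂) : DepthGE m k (M₁ × M₂) :=
  middle LinearMap.inl_injective LinearMap.snd_surjective .inl_snd h₁ h₂

variable {I A B : Ideal R}

theorem quotient_inf (hA : DepthGE m (k + 1) (R ⧸ A)) (hB : DepthGE m (k + 1) (R ⧸ B))
    (hAB : DepthGE m k (R ⧸ A ⊔ B)) : DepthGE m (k + 1) (R ⧸ A ⊓ B) := by
  refine left ?_ ?_ (exact_prod_factor_coprod_factor A B) (hA.prod hB) hAB
  · rw [← LinearMap.ker_eq_bot, LinearMap.ker_eq_bot']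
    intro a ha
    obtain ⟨a, rfl⟩ := Ideal.Quotient.mk_surjective a
    obtain ⟨haA, haB⟩ := Prod.ext_iff.mp ha
    exact Ideal.Quotient.eq_zero_iff_mem.mpr
      ⟨Ideal.Quotient.eq_zero_iff_mem.mp haA, Ideal.Quotient.eq_zero_iff_mem.mp haB⟩
  · intro a
    obtain ⟨a, rfl⟩ := Submodule.factor_surjective (le_sup_left : A ≤ A ⊔ B) a
    exact ⟨(a, 0), by simp only [LinearMap.coprod_apply, map_zero, add_zero]⟩

theorem quotient_of_sup_span {x : R} (hxm : x ∈ m) (hx : IsSMulRegular (R ⧸ I) x)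
    (h : DepthGE m k (R ⧸ I ⊔ Ideal.span {x})) : DepthGE m (k + 1) (R ⧸ I) :=
  of_isSMulRegular hxm hx (Submodule.factor_surjective _) (exact_smul_id_factor I x) h

theorem quotient_sup_span {x : R} (hx : IsSMulRegular (R ⧸ I) x) (h : DepthGE m (k + 1) (R ⧸ I)) :
    DepthGE m k (R ⧸ I ⊔ Ideal.span {x}) :=
  right (fun _ _ h ↦ hx h) (Submodule.factor_surjective _) (exact_smul_id_factor I x) h
    (h.mono k.le_succ)

theorem exists_isRegular [IsNoetherianRing R] (hI : I ≤ m) (hm : m ≠ ⊤)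
    (h : DepthGE m k (R ⧸ I)) :
    ∃ rs : List R, rs.length = k ∧ (∀ r ∈ rs, r ∈ m) ∧ IsRegular (R ⧸ I) rs :=
  ModuleCat.exists_isRegular_of_exists_subsingleton_ext m k (ModuleCat.of R (R ⧸ I))
    (smul_top_quotient_lt_top hI hm) (ModuleCat.of R (R ⧸ m)) (support_quotient_eq_zeroLocus m) h

theorem of_isRegular [IsNoetherianRing R] (hI : I ≤ m) (hm : m ≠ ⊤) {rs : List R}
    (hrs : ∀ r ∈ rs, r ∈ m) (h : IsRegular (R ⧸ I) rs) : DepthGE m rs.length (R ⧸ I) :=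
  ModuleCat.subsingleton_ext_of_exists_isRegular m (ModuleCat.of R (R ⧸ m))
    (support_quotient_eq_zeroLocus m).le (ModuleCat.of R (R ⧸ I)) (smul_top_quotient_lt_top hI hm)
    rs hrs h

end DepthGE

theorem isRegular_map_mk_iff {I : Ideal R} {rs : List R} :
    IsRegular (R ⧸ I) (rs.map (Ideal.Quotient.mk I)) ↔ IsRegular (R ⧸ I) rs := by
  rw [isRegular_iff, isRegular_iff]
  refine and_congr (isWeaklyRegular_map_algebraMap_iff (R ⧸ I) (R ⧸ I) rs) (not_congr ?_)
  have h : (Ideal.ofList (rs.map (Ideal.Quotient.mk I)) • ⊤ :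
      Submodule (R ⧸ I) (R ⧸ I)).restrictScalars R = Ideal.ofList rs • ⊤ := by
    rw [← Ideal.map_ofList, ← Ideal.Quotient.algebraMap_eq,
      Ideal.smul_restrictScalars, Submodule.restrictScalars_top]
  rw [← h, ← Submodule.restrictScalars_top R (R ⧸ I) (R ⧸ I), Submodule.restrictScalars_inj]

theorem le_ringDepth_quotient_iff [IsNoetherianRing R] {m I : Ideal R} (hI : I ≤ m) (hm : m ≠ ⊤)
    {k : ℕ} : (k : ℕ∞) ≤ ringDepth (R ⧸ I) (m.map (Ideal.Quotient.mk I)) ↔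
      DepthGE m k (R ⧸ I) := by
  constructor
  · intro h
    obtain _ | k := k
    · exact DepthGE.zero
    obtain ⟨_, ⟨l, rfl, hl, hreg⟩, hkl⟩ :=
      lt_sSup_iff.mp ((ENat.natCast_lt_natCast.mpr k.lt_succ_self).trans_le h)
    obtain ⟨rs, rfl⟩ := List.map_surjective_iff.mpr Ideal.Quotient.mk_surjective l
    have hrs : ∀ r ∈ rs, r ∈ m := by
      intro r hr
      have hmem := Ideal.mem_comap.mpr (hl _ (List.mem_map_of_mem hr))
      rwa [Ideal.comap_map_of_surjective _ Ideal.Quotient.mk_surjective, ← RingHom.ker_eq_comap_bot,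
        Ideal.mk_ker, sup_eq_left.mpr hI] at hmem
    rw [List.length_map, ENat.natCast_lt_natCast] at hkl
    exact (DepthGE.of_isRegular hI hm hrs (isRegular_map_mk_iff.mp hreg)).mono hkl
  · intro h
    obtain ⟨rs, rfl, hrs, hreg⟩ := h.exists_isRegular hI hm
    refine le_sSup ⟨rs.map (Ideal.Quotient.mk I), by simp, ?_, isRegular_map_mk_iff.mpr hreg⟩
    simp only [List.mem_map, forall_exists_index, and_imp, forall_apply_eq_imp_iff₂]
    exact fun r hr ↦ Ideal.mem_map_of_mem _ (hrs r hr)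

end Depth

section Coheight

open Ideal RingTheory.Sequence

open scoped Pointwise

variable {R : Type*} [CommRing R]

theorem torsionOf_quotSMulTop_torsionBySet {M : Type*} [AddCommGroup M] [Module R M] {x : R}
    (hx : IsSMulRegular M x) {s : Set R} (n : Submodule.torsionBySet R M s) :
    torsionOf R (QuotSMulTop x (Submodule.torsionBySet R M s)) (Submodule.Quotient.mk n) =
      torsionOf R (QuotSMulTop x M) (Submodule.Quotient.mk n.1) := by
  ext a
  rw [mem_torsionOf_iff, mem_torsionOf_iff, ← Submodule.Quotient.mk_smul,
    ← Submodule.Quotient.mk_smul, Submodule.Quotient.mk_eq_zero, Submodule.Quotient.mk_eq_zero,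
    Submodule.mem_smul_pointwise_iff_exists, Submodule.mem_smul_pointwise_iff_exists]
  constructor
  · rintro ⟨b, -, hb⟩
    exact ⟨b, trivial, congrArg Subtype.val hb⟩
  · rintro ⟨b, -, hb⟩
    have hbs : b ∈ Submodule.torsionBySet R M s := by
      refine (Submodule.mem_torsionBySet_iff _ _).mpr fun c ↦ hx ?_
      change x • (c : R) • b = x • (0 : M)
      rw [smul_comm, hb, smul_comm, (Submodule.mem_torsionBySet_iff _ _).mp n.2 c, smul_zero,
        smul_zero]
    exact ⟨⟨b, hbs⟩, trivial, Subtype.ext hb⟩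

variable [IsNoetherianRing R] {m : Ideal R} [m.IsPrime]

theorem exists_gt_torsionOf_quotSMulTop {M : Type*} [AddCommGroup M] [Module R M]
    [Module.Finite R M] {p : PrimeSpectrum R} {u : M} (hp : p.asIdeal ≤ torsionOf R M u)
    (hm : torsionOf R M u ≤ m) {x : R} (hxm : x ∈ m) (hx : IsSMulRegular M x) :
    ∃ q : PrimeSpectrum R, p < q ∧ q.asIdeal ≤ m ∧
      ∃ v : QuotSMulTop x M, torsionOf R (QuotSMulTop x M) v = q.asIdeal := by
  let N : Submodule R M := Submodule.torsionBySet R M p.asIdeal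
  have hu : u ∈ N := (Submodule.mem_torsionBySet_iff _ _).mpr fun a ↦ hp a.2
  have hsupp : (⟨m, inferInstance⟩ : PrimeSpectrum R) ∈ Module.support R (QuotSMulTop x N) := by
    rw [Module.support_quotSMulTop]
    refine ⟨Module.mem_support_iff_exists_annihilator.mpr ⟨⟨u, hu⟩, fun a ha ↦ hm ?_⟩, ?_⟩
    · rw [Submodule.mem_annihilator_span_singleton] at ha
      exact congrArg Subtype.val ha
    · simpa [PrimeSpectrum.mem_zeroLocus] using hxm
  obtain ⟨q, hq, hqm⟩ := exists_minimalPrimes_le (Module.annihilator_le_of_mem_support hsupp)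
  have hass := Module.associatedPrimes.minimalPrimes_annihilator_subset_associatedPrimes R _ hq
  obtain ⟨hqp, n, hn⟩ := isAssociatedPrime_iff.mp hass
  obtain ⟨n, rfl⟩ := Submodule.mkQ_surjective _ n
  have hnq : torsionOf R (QuotSMulTop x M) (Submodule.Quotient.mk n.1) = q := by
    rw [← torsionOf_quotSMulTop_torsionBySet hx n, hn]
    ext a
    rw [mem_torsionOf_iff, Submodule.mem_colon_singleton, Submodule.mem_bot, Submodule.mkQ_apply]
  refine ⟨⟨q, hqp⟩, lt_of_le_not_ge (fun a ha ↦ ?_) fun h ↦ ?_, hqm, _, hnq⟩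
  · change a ∈ q
    rw [← hnq, mem_torsionOf_iff, ← Submodule.Quotient.mk_smul,
      (Submodule.mem_torsionBySet_iff _ _).mp n.2 ⟨a, ha⟩, Submodule.Quotient.mk_zero]
  · have hxq : x ∈ q := by
      rw [← hnq, mem_torsionOf_iff, ← Submodule.Quotient.mk_smul, Submodule.Quotient.mk_eq_zero]
      exact Submodule.smul_mem_pointwise_smul _ _ _ trivial
    have hu0 : u = 0 := hx.right_eq_zero_of_smul (hp (h hxq))
    rw [hu0, torsionOf_zero, top_le_iff] at hm
    exact IsPrime.ne_top' hm

theorem length_le_coheight_of_isWeaklyRegular {M : Type*} [AddCommGroup M] [Module R M]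
    [Module.Finite R M] {rs : List R} (hrs : ∀ r ∈ rs, r ∈ m) (hreg : IsWeaklyRegular M rs)
    {p : PrimeSpectrum R} {u : M} (hp : p.asIdeal ≤ torsionOf R M u) (hm : torsionOf R M u ≤ m) :
    (rs.length : ℕ∞) ≤ Order.coheight p := by
  induction rs generalizing M p with
  | nil => simp
  | cons x rs ih =>
    obtain ⟨hx, hreg⟩ := (isWeaklyRegular_cons_iff M x rs).mp hreg
    rw [List.forall_mem_cons] at hrs
    obtain ⟨q, hpq, hqm, v, hv⟩ := exists_gt_torsionOf_quotSMulTop hp hm hrs.1 hx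
    calc ((x :: rs).length : ℕ∞) = rs.length + 1 := by simp
      _ ≤ Order.coheight q + 1 := by gcongr; exact ih hrs.2 hreg hv.ge (hv.trans_le hqm)
      _ ≤ Order.coheight p := Order.coheight_add_one_le hpq

theorem mem_torsionOf_quotient_mk_iff {S : Type*} [CommRing S] {I : Ideal S} {a r : S} :
    r ∈ torsionOf S (S ⧸ I) (Ideal.Quotient.mk I a) ↔ r * a ∈ I := by
  rw [mem_torsionOf_iff, Algebra.smul_def, Ideal.Quotient.algebraMap_eq, ← map_mul,
    Ideal.Quotient.eq_zero_iff_mem]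

end Coheight

section MinimalPrimes

variable {R : Type*} [CommRing R] {J A B : Ideal R}

theorem torsionOf_quotient_sup_span_eq_sup [hA : A.IsPrime] [hB : B.IsPrime]
    [hAB : (A ⊔ B).IsPrime] (hJA : J ≤ A) (hJB : J ≤ B) {g a b : R} (hg : g ∉ A ⊔ B)
    (hgJ : ∀ z ∈ A ⊓ B, g * z ∈ J) (ha : a ∈ A) (hb : b ∈ B) (haB : a ∉ B) (hbA : b ∉ A) :
    Ideal.torsionOf R (R ⧸ J ⊔ Ideal.span {a + b}) (Ideal.Quotient.mk _ (g * a)) = A ⊔ B := by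
  ext s
  rw [mem_torsionOf_quotient_mk_iff]
  constructor
  · intro hs
    obtain ⟨z, hz, y, hy, hzy⟩ := Submodule.mem_sup.mp hs
    obtain ⟨t, rfl⟩ := Ideal.mem_span_singleton'.mp hy
    have htb : t * b ∈ A := by
      rw [show t * b = (s * g - t) * a - z by linear_combination hzy]
      exact sub_mem (Ideal.mul_mem_left _ _ ha) (hJA hz)
    have hta : (s * g - t) * a ∈ B := by
      rw [show (s * g - t) * a = z + t * b by linear_combination -hzy]
      exact add_mem (hJB hz) (Ideal.mul_mem_left _ _ hb)
    refine (hAB.mem_or_mem (?_ : s * g ∈ A ⊔ B)).resolve_right hg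
    rw [show s * g = t + (s * g - t) by ring]
    exact Submodule.add_mem_sup ((hA.mem_or_mem htb).resolve_right hbA)
      ((hB.mem_or_mem hta).resolve_right haB)
  · intro hs
    obtain ⟨α, hα, β, hβ, rfl⟩ := Submodule.mem_sup.mp hs
    rw [show (α + β) * (g * a) = (g * (β * a) - g * (α * b)) + g * α * (a + b) by ring]
    refine Submodule.add_mem_sup (sub_mem (hgJ _ ⟨?_, ?_⟩) (hgJ _ ⟨?_, ?_⟩))
      (Ideal.mul_mem_left _ _ (Ideal.mem_span_singleton_self _))
    exacts [Ideal.mul_mem_left _ _ ha, Ideal.mul_mem_right _ _ hβ, Ideal.mul_mem_right _ _ hα,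
      Ideal.mul_mem_left _ _ hb]

theorem mem_iff_forall_mem_minimalPrimes (hJ : J.IsRadical) {r : R} :
    r ∈ J ↔ ∀ Q ∈ J.minimalPrimes, r ∈ Q := by
  rw [← Submodule.mem_sInf, Ideal.sInf_minimalPrimes, hJ.radical]

variable [IsNoetherianRing R]

theorem exists_isSMulRegular_add (hJ : J.IsRadical) (hA : A ∈ J.minimalPrimes)
    (hB : B ∈ J.minimalPrimes) (hAB : A ≠ B) :
    ∃ a ∈ A, ∃ b ∈ B, a ∉ B ∧ b ∉ A ∧ IsSMulRegular (R ⧸ J) (a + b) := by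
  have hsup : ∀ Q ∈ J.minimalPrimes, ¬ A ⊔ B ≤ Q := by
    intro Q hQ hle
    obtain ⟨hAQ, hBQ⟩ := sup_le_iff.mp hle
    exact hAB ((hAQ.antisymm (hQ.2 hA.1 hAQ)).trans (hBQ.antisymm (hQ.2 hB.1 hBQ)).symm)
  obtain ⟨w, hw, hwQ⟩ : ∃ w ∈ A ⊔ B, ∀ Q ∈ J.minimalPrimes, w ∉ Q := by
    by_contra! h
    obtain ⟨Q, hQ, hle⟩ := (Ideal.subset_union_prime_finite
      J.finite_minimalPrimes_of_isNoetherianRing (f := id) A A fun Q hQ _ _ ↦ hQ.1.1).mp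
        fun w hw ↦ by simpa using h w hw
    exact hsup Q hQ hle
  obtain ⟨a, ha, b, hb, rfl⟩ := Submodule.mem_sup.mp hw
  refine ⟨a, ha, b, hb, fun h ↦ hwQ B hB (add_mem h hb), fun h ↦ hwQ A hA (add_mem ha h), ?_⟩
  refine (isSMulRegular_quotient_iff_mem_of_smul_mem _ _).mpr fun c hc ↦ ?_
  rw [mem_iff_forall_mem_minimalPrimes hJ] at hc ⊢
  exact fun Q hQ ↦ (hQ.1.1.mem_or_mem (hc Q hQ)).resolve_left (hwQ Q hQ)

theorem exists_notMem_mul_mem_of_isRadical (hJ : J.IsRadical) {P : Ideal R} [hP : P.IsPrime]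
    (hAB : ∀ Q ∈ J.minimalPrimes, Q ≤ P → Q = A ∨ Q = B) :
    ∃ g ∉ P, ∀ z ∈ A ⊓ B, g * z ∈ J := by
  have hfin : (J.minimalPrimes \ {A, B}).Finite :=
    J.finite_minimalPrimes_of_isNoetherianRing.sdiff
  obtain ⟨g, hg, hgP⟩ : ∃ g ∈ hfin.toFinset.inf id, g ∉ P := by
    by_contra! h
    obtain ⟨Q, hQ, hQP⟩ := hP.inf_le'.mp h
    rw [Set.Finite.mem_toFinset] at hQ
    exact hQ.2 (hAB Q hQ.1 hQP)
  refine ⟨g, hgP, fun z hz ↦ (mem_iff_forall_mem_minimalPrimes hJ).mpr fun Q hQ ↦ ?_⟩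
  by_cases hQAB : Q ∈ ({A, B} : Set (Ideal R))
  · obtain rfl | rfl := hQAB
    exacts [Ideal.mul_mem_left _ _ hz.1, Ideal.mul_mem_left _ _ hz.2]
  · exact Ideal.mul_mem_right _ _
      (Submodule.mem_finsetInf.mp hg Q (hfin.mem_toFinset.mpr ⟨hQ, hQAB⟩))

/- Modulo `J + (a + b)`, where `a + b` is a nonzerodivisor with `a ∈ A` and `b ∈ B`, the class of
`g a` has annihilator `A + B`. -/
theorem DepthGE.le_coheight_sup {m : Ideal R} [hm : m.IsPrime] (hJ : J.IsRadical)
    (hA : A ∈ J.minimalPrimes) (hB : B ∈ J.minimalPrimes) (hne : A ≠ B) [hAB : (A ⊔ B).IsPrime]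
    (hABm : A ⊔ B ≤ m) (hmin : ∀ Q ∈ J.minimalPrimes, Q ≤ A ⊔ B → Q = A ∨ Q = B) {k : ℕ}
    (h : DepthGE m (k + 1) (R ⧸ J)) :
    (k : ℕ∞) ≤ Order.coheight (⟨A ⊔ B, hAB⟩ : PrimeSpectrum R) := by
  obtain ⟨g, hg, hgJ⟩ := exists_notMem_mul_mem_of_isRadical hJ hmin
  obtain ⟨a, ha, b, hb, haB, hbA, hab⟩ := exists_isSMulRegular_add hJ hA hB hne
  have := hA.1.1
  have := hB.1.1
  have htors := torsionOf_quotient_sup_span_eq_sup hA.1.2 hB.1.2 hg hgJ ha hb haB hbA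
  have hI : J ⊔ Ideal.span {a + b} ≤ m := by
    refine (sup_le (hA.1.2.trans le_sup_left) ?_).trans hABm
    rw [Ideal.span_singleton_le_iff_mem]
    exact Submodule.add_mem_sup ha hb
  obtain ⟨rs, rfl, hrs, hreg⟩ := (h.quotient_sup_span hab).exists_isRegular hI hm.ne_top
  exact length_le_coheight_of_isWeaklyRegular hrs hreg.toIsWeaklyRegular htors.ge
    (htors.trans_le hABm)

end MinimalPrimes

section CliqueIdeal

variable (K : Type*) [Field K] {V ι : Type*}

/-- The `2`-minor `x_i y_j - x_j y_i` of the generic `2 × V` matrix. -/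
def edgeMinor (i j : V) : MvPolynomial (V ⊕ V) K :=
  X (Sum.inl i) * X (Sum.inr j) - X (Sum.inl j) * X (Sum.inr i)

/-- The ideal defining a disjoint union of cliques, the classes of a labelling `c`, some of whose
vertices have been killed: it is generated by the variables `x_i` with `i ∈ A`, the variables
`y_i` with `i ∈ B`, and the `2`-minors on the pairs of equally labelled vertices outside `A`.
Labellings, rather than equivalence relations, make the parametrization `cliqueParam` explicit. -/
def cliqueIdeal (A B : Set V) (c : V → ι) : Ideal (MvPolynomial (V ⊕ V) K) :=
  Ideal.span ({ f | ∃ i ∈ A, f = X (Sum.inl i) } ∪ { f | ∃ i ∈ B, f = X (Sum.inr i) } ∪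
    { f | ∃ i j, i ∉ A ∧ j ∉ A ∧ c i = c j ∧ f = edgeMinor K i j })

/-- The exponents of the images of the variables under the parametrization `x_i ↦ a_i s_{c i}`,
`y_i ↦ a_i t_{c i}`. -/
def paramExponent (c : V → ι) : V ⊕ V → (V ⊕ ι ⊕ ι →₀ ℕ)
  | Sum.inl i => Finsupp.single (Sum.inl i) 1 + Finsupp.single (Sum.inr (Sum.inl (c i))) 1
  | Sum.inr i => Finsupp.single (Sum.inl i) 1 + Finsupp.single (Sum.inr (Sum.inr (c i))) 1

/-- The exponent of the image of a monomial under the parametrization `x_i ↦ a_i s_{c i}`,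
`y_i ↦ a_i t_{c i}`. -/
def paramDegree (c : V → ι) : (V ⊕ V →₀ ℕ) →ₗ[ℕ] (V ⊕ ι ⊕ ι →₀ ℕ) :=
  Finsupp.linearCombination ℕ (paramExponent c)

/-- The variables `x_i` with `i ∈ A` and `y_i` with `i ∈ B`. -/
def killedVars (A B : Set V) : Set (V ⊕ V) :=
  Sum.elim A B

open Classical in
/-- The parametrization `x_i ↦ a_i s_{c i}`, `y_i ↦ a_i t_{c i}` of the zero locus of a clique
ideal, where the variables in `killedVars A B` are sent to zero. -/
def cliqueParam (A B : Set V) (c : V → ι) :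
    MvPolynomial (V ⊕ V) K →ₐ[K] MvPolynomial (V ⊕ ι ⊕ ι) K :=
  aeval fun v ↦ if v ∈ killedVars A B then 0 else monomial (paramExponent c v) 1

variable {K} {A B : Set V} {c : V → ι}

theorem X_inl_mem_cliqueIdeal {i : V} (hi : i ∈ A) :
    X (Sum.inl i) ∈ cliqueIdeal K A B c :=
  Ideal.subset_span (Or.inl (Or.inl ⟨i, hi, rfl⟩))

theorem X_inr_mem_cliqueIdeal {i : V} (hi : i ∈ B) :
    X (Sum.inr i) ∈ cliqueIdeal K A B c :=
  Ideal.subset_span (Or.inl (Or.inr ⟨i, hi, rfl⟩))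

theorem edgeMinor_mem_cliqueIdeal {i j : V} (hi : i ∉ A) (hj : j ∉ A) (h : c i = c j) :
    edgeMinor K i j ∈ cliqueIdeal K A B c :=
  Ideal.subset_span (Or.inr ⟨i, j, hi, hj, h, rfl⟩)

theorem cliqueIdeal_le_iff {I : Ideal (MvPolynomial (V ⊕ V) K)} :
    cliqueIdeal K A B c ≤ I ↔ (∀ i ∈ A, X (Sum.inl i) ∈ I) ∧ (∀ i ∈ B, X (Sum.inr i) ∈ I) ∧
      ∀ i j, i ∉ A → j ∉ A → c i = c j → edgeMinor K i j ∈ I := by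
  constructor
  · intro h
    exact ⟨fun i hi ↦ h (X_inl_mem_cliqueIdeal hi), fun i hi ↦ h (X_inr_mem_cliqueIdeal hi),
      fun i j hi hj hc ↦ h (edgeMinor_mem_cliqueIdeal hi hj hc)⟩
  · rintro ⟨hx, hy, hxy⟩
    refine Ideal.span_le.2 ?_
    rintro f ((⟨i, hi, rfl⟩ | ⟨i, hi, rfl⟩) | ⟨i, j, hi, hj, hc, rfl⟩)
    exacts [hx i hi, hy i hi, hxy i j hi hj hc]

theorem edgeMinor_mem_of_X_mem {I : Ideal (MvPolynomial (V ⊕ V) K)} {i j : V}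
    (hx : X (Sum.inl i) ∈ I) (hy : X (Sum.inr i) ∈ I) : edgeMinor K i j ∈ I :=
  I.sub_mem (I.mul_mem_right _ hx) (I.mul_mem_left _ hy)

theorem edgeMinor_swap (i j : V) : edgeMinor K i j = -edgeMinor K j i :=
  (neg_sub _ _).symm

theorem paramDegree_inl (m : V ⊕ V →₀ ℕ) (i : V) :
    paramDegree c m (Sum.inl i) = m (Sum.inl i) + m (Sum.inr i) := by
  classical
  induction m using Finsupp.induction_linear with
  | zero => simp
  | add m m' h h' => simp only [map_add, Finsupp.add_apply, h, h']; ring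
  | single v k => cases v <;> simp [paramDegree, paramExponent, Finsupp.single_apply]

theorem paramDegree_inr_inl [Fintype V] [DecidableEq ι] (m : V ⊕ V →₀ ℕ) (l : ι) :
    paramDegree c m (Sum.inr (Sum.inl l)) = ∑ i with c i = l, m (Sum.inl i) := by
  classical
  rw [paramDegree, Finsupp.linearCombination_apply, Finsupp.sum_fintype _ _ (by simp)]
  simp [paramExponent, Finsupp.single_apply, Finset.sum_filter]

theorem cliqueParam_monomial_of_mem {m : V ⊕ V →₀ ℕ} {v : V ⊕ V} (hv : v ∈ killedVars A B)
    (hm : m v ≠ 0) : cliqueParam K A B c (monomial m 1) = 0 := by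
  rw [cliqueParam, aeval_monomial, map_one, one_mul]
  exact Finset.prod_eq_zero (Finsupp.mem_support_iff.2 hm) (by simp [hv, hm])

theorem cliqueParam_monomial {m : V ⊕ V →₀ ℕ} (hm : ∀ v ∈ killedVars A B, m v = 0) :
    cliqueParam K A B c (monomial m 1) = monomial (paramDegree c m) 1 := by
  rw [cliqueParam, aeval_monomial, map_one, one_mul, paramDegree,
    Finsupp.linearCombination_apply, Finsupp.sum, monomial_sum_one]
  refine Finset.prod_congr rfl fun v hv ↦ ?_
  have hv' : v ∉ killedVars A B := fun h ↦ Finsupp.mem_support_iff.1 hv (hm v h)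
  simp [hv', monomial_pow]

theorem cliqueParam_X_of_notMem {v : V ⊕ V} (hv : v ∉ killedVars A B) :
    cliqueParam K A B c (X v) = monomial (paramExponent c v) 1 := by
  simp [cliqueParam, hv]

theorem cliqueParam_edgeMinor (hBA : B ⊆ A) {i j : V} (hi : i ∉ A) (hj : j ∉ A) :
    cliqueParam K A B c (edgeMinor K i j) =
      monomial (paramExponent c (Sum.inl i) + paramExponent c (Sum.inr j)) 1 -
        monomial (paramExponent c (Sum.inl j) + paramExponent c (Sum.inr i)) 1 := by
  have hi' : Sum.inr i ∉ killedVars A B := fun h ↦ hi (hBA h)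
  have hj' : Sum.inr j ∉ killedVars A B := fun h ↦ hj (hBA h)
  rw [edgeMinor, map_sub, map_mul, map_mul, cliqueParam_X_of_notMem (v := Sum.inl i) hi,
    cliqueParam_X_of_notMem (v := Sum.inl j) hj, cliqueParam_X_of_notMem hi',
    cliqueParam_X_of_notMem hj', monomial_mul, monomial_mul, one_mul]

theorem cliqueParam_edgeMinor_eq_zero_iff (hBA : B ⊆ A) {i j : V} (hi : i ∉ A) (hj : j ∉ A) :
    cliqueParam K A B c (edgeMinor K i j) = 0 ↔ c i = c j := by
  classical
  rw [cliqueParam_edgeMinor hBA hi hj, sub_eq_zero]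
  refine ⟨fun h ↦ by_contra fun hne ↦ ?_, fun h ↦ ?_⟩
  · have := DFunLike.congr_fun (monomial_left_injective one_ne_zero h) (Sum.inr (Sum.inl (c i)))
    simp [paramExponent, Ne.symm hne] at this
  · simp only [paramExponent, h]
    congr 2
    abel

theorem exists_lt_of_paramDegree_eq [Finite V] {m m' : V ⊕ V →₀ ℕ}
    (h : paramDegree c m = paramDegree c m') (hne : m ≠ m') :
    ∃ j k, c j = c k ∧ m' (Sum.inl j) < m (Sum.inl j) ∧ m (Sum.inl k) < m' (Sum.inl k) := by
  classical
  have := Fintype.ofFinite V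
  have hsum (i : V) : m (Sum.inl i) + m (Sum.inr i) = m' (Sum.inl i) + m' (Sum.inr i) := by
    rw [← paramDegree_inl (c := c), ← paramDegree_inl (c := c), h]
  have hclass (l : ι) : ∑ i with c i = l, m (Sum.inl i) = ∑ i with c i = l, m' (Sum.inl i) := by
    rw [← paramDegree_inr_inl (c := c), ← paramDegree_inr_inl (c := c), h]
  obtain ⟨i, hi⟩ : ∃ i, m (Sum.inl i) ≠ m' (Sum.inl i) := by
    by_contra! heq
    exact hne (by ext (i | i) <;> have := hsum i <;> have := heq i <;> omega)
  have hij : ∃ j, c j = c i ∧ m' (Sum.inl j) < m (Sum.inl j) := by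
    by_contra! hle
    exact hi ((Finset.sum_eq_sum_iff_of_le fun j hj ↦ hle j (by simpa using hj)).1
      (hclass (c i)) i (by simp))
  have hik : ∃ k, c k = c i ∧ m (Sum.inl k) < m' (Sum.inl k) := by
    by_contra! hle
    exact hi ((Finset.sum_eq_sum_iff_of_le fun j hj ↦ hle j (by simpa using hj)).1
      (hclass (c i)).symm i (by simp)).symm
  obtain ⟨⟨j, hcj, hj⟩, k, hck, hk⟩ := hij, hik
  exact ⟨j, k, hcj.trans hck.symm, hj, hk⟩

/-- The exponent of `x_j y_k`. -/
def crossExponent (j k : V) : V ⊕ V →₀ ℕ :=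
  Finsupp.single (Sum.inl j) 1 + Finsupp.single (Sum.inr k) 1

theorem monomial_add_crossExponent_sub (q : V ⊕ V →₀ ℕ) (j k : V) :
    monomial (q + crossExponent j k) (1 : K) - monomial (q + crossExponent k j) 1 =
      monomial q 1 * edgeMinor K j k := by
  rw [edgeMinor, mul_sub]
  simp only [crossExponent, X, monomial_mul, one_mul]

theorem paramDegree_crossExponent_comm {j k : V} (h : c j = c k) :
    paramDegree c (crossExponent j k) = paramDegree c (crossExponent k j) := by
  simp only [paramDegree, crossExponent, map_add, Finsupp.linearCombination_single, one_smul,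
    paramExponent, h]
  abel

theorem crossExponent_le {m : V ⊕ V →₀ ℕ} {j k : V} (hj : m (Sum.inl j) ≠ 0)
    (hk : m (Sum.inr k) ≠ 0) : crossExponent j k ≤ m := by
  classical
  rintro (i | i)
  · by_cases hi : j = i
    · subst hi
      simpa [crossExponent, Nat.one_le_iff_ne_zero] using hj
    · simp [crossExponent, hi]
  · by_cases hi : k = i
    · subst hi
      simpa [crossExponent, Nat.one_le_iff_ne_zero] using hk
    · simp [crossExponent, hi]

theorem sum_sub_crossExponent_lt [Fintype V] {q m : V ⊕ V →₀ ℕ} {j k : V}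
    (hj : m (Sum.inl j) < (q + crossExponent j k) (Sum.inl j))
    (hk : (q + crossExponent j k) (Sum.inl k) < m (Sum.inl k)) :
    ∑ i, ((q + crossExponent k j) (Sum.inl i) - m (Sum.inl i)) <
      ∑ i, ((q + crossExponent j k) (Sum.inl i) - m (Sum.inl i)) := by
  classical
  have hjk : j ≠ k := by
    rintro rfl
    exact hj.asymm hk
  simp only [crossExponent, Finsupp.add_apply, Finsupp.single_apply, Sum.inl.injEq, reduceCtorEq,
    if_false, add_zero] at hj hk ⊢
  refine Finset.sum_lt_sum (fun i _ ↦ ?_) ⟨j, Finset.mem_univ _, ?_⟩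
  · by_cases hi : k = i
    · subst hi
      simp only [hjk, if_true, if_false] at hk ⊢
      omega
    · simp only [hi, if_false]
      omega
  · simp only [hjk.symm, if_true, if_false] at hj ⊢
    omega

/-- Exchanging an `x_j y_k` for `x_k y_j` keeps the image under the parametrization and brings the
`x`-exponents closer to those of the target. -/
theorem monomial_sub_monomial_mem_cliqueIdeal [Finite V] (hBA : B ⊆ A) {m m' : V ⊕ V →₀ ℕ}
    (hm : ∀ v ∈ killedVars A B, m v = 0) (hm' : ∀ v ∈ killedVars A B, m' v = 0)
    (h : paramDegree c m = paramDegree c m') :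
    monomial m (1 : K) - monomial m' 1 ∈ cliqueIdeal K A B c := by
  have := Fintype.ofFinite V
  induction hN : ∑ i, (m (Sum.inl i) - m' (Sum.inl i)) using Nat.strong_induction_on
    generalizing m with
  | _ N ih =>
    obtain rfl | hne := eq_or_ne m m'
    · simp
    obtain ⟨j, k, hc, hj, hk⟩ := exists_lt_of_paramDegree_eq h hne
    have hjA : j ∉ A := fun hjA ↦ by
      rw [hm (Sum.inl j) hjA] at hj
      omega
    have hkA : k ∉ A := fun hkA ↦ by
      rw [hm' (Sum.inl k) hkA] at hk
      omega
    have hk₀ : m (Sum.inr k) ≠ 0 := by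
      have := paramDegree_inl (c := c) m k
      rw [h, paramDegree_inl] at this
      omega
    obtain ⟨q, rfl⟩ : ∃ q, m = q + crossExponent j k :=
      ⟨_, (tsub_add_cancel_of_le (crossExponent_le (by omega) hk₀)).symm⟩
    have hswap : ∀ v ∈ killedVars A B, (q + crossExponent k j) v = 0 := by
      intro v hv
      have hqv : q v = 0 := (Nat.add_eq_zero_iff.1 (hm v hv)).1
      have hkv : Sum.inl k ≠ v := by
        rintro rfl
        exact hkA hv
      have hjv : Sum.inr j ≠ v := by
        rintro rfl
        exact hjA (hBA hv)
      simp [crossExponent, hqv, hkv, hjv]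
    have hdeg : paramDegree c (q + crossExponent k j) = paramDegree c m' := by
      rw [← h, map_add, map_add, paramDegree_crossExponent_comm hc]
    have hrest := ih _ (hN ▸ sum_sub_crossExponent_lt hj hk) hswap hdeg rfl
    have hexch := monomial_add_crossExponent_sub (K := K) q j k ▸
      Ideal.mul_mem_left _ (monomial q 1) (edgeMinor_mem_cliqueIdeal (B := B) hjA hkA hc)
    simpa using add_mem hexch hrest

theorem cliqueIdeal_le_ker_cliqueParam (hBA : B ⊆ A) :
    cliqueIdeal K A B c ≤ RingHom.ker (cliqueParam K A B c) := by
  refine cliqueIdeal_le_iff.2 ⟨fun i hi ↦ ?_, fun i hi ↦ ?_, fun i j hi hj hc ↦ ?_⟩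
  · have : Sum.inl i ∈ killedVars A B := hi
    simp [RingHom.mem_ker, cliqueParam, this]
  · have : Sum.inr i ∈ killedVars A B := hi
    simp [RingHom.mem_ker, cliqueParam, this]
  · exact (cliqueParam_edgeMinor_eq_zero_iff hBA hi hj).2 hc

theorem monomial_mem_cliqueIdeal {m : V ⊕ V →₀ ℕ} {v : V ⊕ V} (hv : v ∈ killedVars A B)
    (hm : m v ≠ 0) : monomial m 1 ∈ cliqueIdeal K A B c := by
  have hX : X v ∈ cliqueIdeal K A B c := by
    rcases v with i | i
    exacts [X_inl_mem_cliqueIdeal hv, X_inr_mem_cliqueIdeal hv]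
  exact Ideal.mem_of_dvd _ (X_dvd_monomial.2 (Or.inr hm)) hX

theorem ker_cliqueParam [Finite V] (hBA : B ⊆ A) :
    RingHom.ker (cliqueParam K A B c) = cliqueIdeal K A B c := by
  classical
  refine le_antisymm (fun f hf ↦ ?_) (cliqueIdeal_le_ker_cliqueParam hBA)
  let IsLift (e : V ⊕ ι ⊕ ι →₀ ℕ) (m : V ⊕ V →₀ ℕ) : Prop :=
    (∀ v ∈ killedVars A B, m v = 0) ∧ paramDegree c m = e
  let lift (e : V ⊕ ι ⊕ ι →₀ ℕ) : MvPolynomial (V ⊕ V) K ⧸ cliqueIdeal K A B c :=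
    if h : ∃ m, IsLift e m then Ideal.Quotient.mk _ (monomial h.choose 1) else 0
  let ψ := (basisMonomials (V ⊕ ι ⊕ ι) K).constr K lift
  have hψ (e : V ⊕ ι ⊕ ι →₀ ℕ) : ψ (monomial e 1) = lift e := by
    simpa only [coe_basisMonomials] using (basisMonomials (V ⊕ ι ⊕ ι) K).constr_basis K lift e
  have hψ_comp : ψ ∘ₗ (cliqueParam K A B c).toLinearMap =
      (Ideal.Quotient.mkₐ K (cliqueIdeal K A B c)).toLinearMap := by
    refine (basisMonomials _ K).ext fun m ↦ ?_
    simp only [coe_basisMonomials, LinearMap.comp_apply, AlgHom.toLinearMap_apply,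
      Ideal.Quotient.mkₐ_eq_mk]
    by_cases hm : ∀ v ∈ killedVars A B, m v = 0
    · have hex : ∃ m', IsLift (paramDegree c m) m' := ⟨m, hm, rfl⟩
      rw [cliqueParam_monomial hm, hψ, show lift _ = _ from dif_pos hex, Ideal.Quotient.eq]
      exact monomial_sub_monomial_mem_cliqueIdeal hBA hex.choose_spec.1 hm hex.choose_spec.2
    · push Not at hm
      obtain ⟨v, hv, hmv⟩ := hm
      rw [cliqueParam_monomial_of_mem hv hmv, map_zero, eq_comm, Ideal.Quotient.eq_zero_iff_mem]
      exact monomial_mem_cliqueIdeal hv hmv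
  rw [← Ideal.Quotient.eq_zero_iff_mem]
  have := LinearMap.congr_fun hψ_comp f
  rw [LinearMap.comp_apply, AlgHom.toLinearMap_apply, RingHom.mem_ker.1 hf, map_zero] at this
  exact this.symm

theorem cliqueIdeal_isPrime [Finite V] (hBA : B ⊆ A) : (cliqueIdeal K A B c).IsPrime := by
  rw [← ker_cliqueParam hBA]
  exact RingHom.ker_isPrime _

theorem X_inl_mem_cliqueIdeal_iff (hBA : B ⊆ A) {i : V} :
    X (Sum.inl i) ∈ cliqueIdeal K A B c ↔ i ∈ A := by
  refine ⟨fun h ↦ by_contra fun hi ↦ ?_, X_inl_mem_cliqueIdeal⟩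
  have := RingHom.mem_ker.1 (cliqueIdeal_le_ker_cliqueParam hBA h)
  rw [cliqueParam_X_of_notMem (v := Sum.inl i) hi] at this
  simp at this

theorem X_inr_mem_cliqueIdeal_iff (hBA : B ⊆ A) {i : V} :
    X (Sum.inr i) ∈ cliqueIdeal K A B c ↔ i ∈ B := by
  refine ⟨fun h ↦ by_contra fun hi ↦ ?_, X_inr_mem_cliqueIdeal⟩
  have := RingHom.mem_ker.1 (cliqueIdeal_le_ker_cliqueParam hBA h)
  rw [cliqueParam_X_of_notMem (v := Sum.inr i) hi] at this
  simp at this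

theorem edgeMinor_mem_cliqueIdeal_iff (hBA : B ⊆ A) {i j : V} (hi : i ∉ A) (hj : j ∉ A) :
    edgeMinor K i j ∈ cliqueIdeal K A B c ↔ c i = c j :=
  ⟨fun h ↦ (cliqueParam_edgeMinor_eq_zero_iff hBA hi hj).1
    (cliqueIdeal_le_ker_cliqueParam hBA h), edgeMinor_mem_cliqueIdeal hi hj⟩

end CliqueIdeal

section CliqueIdealDimension

variable {K : Type*} [Field K] {V ι : Type*} {A A' B B' : Set V} {c : V → ι} {i : V}

theorem cliqueIdeal_mono (hA : A ⊆ A') (hB : B ⊆ B')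
    (h : ∀ i j, i ∉ A → j ∉ A → i ∈ A' → c i = c j → i ∈ B' ∨ j ∈ A') :
    cliqueIdeal K A B c ≤ cliqueIdeal K A' B' c := by
  refine cliqueIdeal_le_iff.2 ⟨fun i hi ↦ X_inl_mem_cliqueIdeal (hA hi),
    fun i hi ↦ X_inr_mem_cliqueIdeal (hB hi), fun i j hi hj hc ↦ ?_⟩
  have minor_mem (i j : V) (hi' : i ∈ A') (h : i ∈ B' ∨ j ∈ A') :
      edgeMinor K i j ∈ cliqueIdeal K A' B' c := by
    refine sub_mem (Ideal.mul_mem_right _ _ (X_inl_mem_cliqueIdeal hi')) ?_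
    rcases h with h | h
    · exact Ideal.mul_mem_left _ _ (X_inr_mem_cliqueIdeal h)
    · exact Ideal.mul_mem_right _ _ (X_inl_mem_cliqueIdeal h)
  by_cases hi' : i ∈ A'
  · exact minor_mem i j hi' (h i j hi hj hi' hc)
  by_cases hj' : j ∈ A'
  · rw [edgeMinor_swap]
    exact neg_mem (minor_mem j i hj' (h j i hj hi hj' hc.symm))
  · exact edgeMinor_mem_cliqueIdeal hi' hj' hc

theorem cliqueIdeal_le_idealOfVars : cliqueIdeal K A B c ≤ idealOfVars (V ⊕ V) K :=
  have X_mem (v : V ⊕ V) : X v ∈ idealOfVars (V ⊕ V) K := Ideal.subset_span ⟨v, rfl⟩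
  cliqueIdeal_le_iff.2 ⟨fun _ _ ↦ X_mem _, fun _ _ ↦ X_mem _,
    fun _ _ _ _ _ ↦ edgeMinor_mem_of_X_mem (X_mem _) (X_mem _)⟩

theorem idealOfVars_eq_cliqueIdeal (c : V → ι) :
    idealOfVars (V ⊕ V) K = cliqueIdeal K Set.univ Set.univ c := by
  refine le_antisymm (Ideal.span_le.2 ?_) cliqueIdeal_le_idealOfVars
  rintro _ ⟨i | i, rfl⟩
  · exact X_inl_mem_cliqueIdeal trivial
  · exact X_inr_mem_cliqueIdeal trivial

theorem idealOfVars_isPrime [Finite V] : (idealOfVars (V ⊕ V) K).IsPrime := by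
  rw [idealOfVars_eq_cliqueIdeal id]
  exact cliqueIdeal_isPrime subset_rfl

theorem cliqueIdeal_sup_span_inr :
    cliqueIdeal K A B c ⊔ Ideal.span {X (Sum.inr i)} = cliqueIdeal K A (insert i B) c := by
  apply le_antisymm
  · refine sup_le (cliqueIdeal_mono subset_rfl (Set.subset_insert i B)
      fun j k hj _ hj' _ ↦ absurd hj' hj) ?_
    exact (Ideal.span_singleton_le_iff_mem _).2 (X_inr_mem_cliqueIdeal (Set.mem_insert i B))
  · refine cliqueIdeal_le_iff.2 ⟨fun j hj ↦ Ideal.mem_sup_left (X_inl_mem_cliqueIdeal hj), ?_,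
      fun j k hj hk h ↦ Ideal.mem_sup_left (edgeMinor_mem_cliqueIdeal hj hk h)⟩
    rintro j (rfl | hj)
    · exact Ideal.mem_sup_right (Ideal.mem_span_singleton_self _)
    · exact Ideal.mem_sup_left (X_inr_mem_cliqueIdeal hj)

theorem cliqueIdeal_sup_span_inl_sup_span_inr :
    cliqueIdeal K A B c ⊔ Ideal.span {X (Sum.inl i)} ⊔ Ideal.span {X (Sum.inr i)} =
      cliqueIdeal K (insert i A) (insert i B) c := by
  apply le_antisymm
  · refine sup_le (sup_le (cliqueIdeal_mono (Set.subset_insert i A) (Set.subset_insert i B) ?_) ?_)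
      ?_
    · rintro j k hj - (rfl | hj') -
      exacts [Or.inl (Set.mem_insert _ _), absurd hj' hj]
    · exact (Ideal.span_singleton_le_iff_mem _).2 (X_inl_mem_cliqueIdeal (Set.mem_insert i A))
    · exact (Ideal.span_singleton_le_iff_mem _).2 (X_inr_mem_cliqueIdeal (Set.mem_insert i B))
  · rw [sup_assoc, sup_comm]
    refine cliqueIdeal_le_iff.2 ⟨?_, ?_, fun j k hj hk h ↦ Ideal.mem_sup_right
      (edgeMinor_mem_cliqueIdeal (fun h ↦ hj (Or.inr h)) (fun h ↦ hk (Or.inr h)) h)⟩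
    · rintro j (rfl | hj)
      · exact Ideal.mem_sup_left (Ideal.mem_sup_left (Ideal.mem_span_singleton_self _))
      · exact Ideal.mem_sup_right (X_inl_mem_cliqueIdeal hj)
    · rintro j (rfl | hj)
      · exact Ideal.mem_sup_left (Ideal.mem_sup_right (Ideal.mem_span_singleton_self _))
      · exact Ideal.mem_sup_right (X_inr_mem_cliqueIdeal hj)

theorem inf_sup_span_singleton_le {R : Type*} [CommRing R] {J P : Ideal R} [hP : P.IsPrime]
    {y : R} (hJP : J ≤ P) (hy : y ∉ P) (hPJ : ∀ p ∈ P, p * y ∈ J) :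
    P ⊓ (J ⊔ Ideal.span {y}) ≤ J := by
  rintro z ⟨hzP, hz⟩
  obtain ⟨j, hj, _, hw, rfl⟩ := Submodule.mem_sup.1 hz
  obtain ⟨p, rfl⟩ := Ideal.mem_span_singleton'.1 hw
  have hpy : p * y ∈ P := (add_mem_cancel_left (hJP hj)).1 hzP
  exact add_mem hj (hPJ p ((hP.mem_or_mem hpy).resolve_right hy))

theorem mul_X_inr_mem_of_mem_cliqueIdeal (hi : i ∉ A) {p : MvPolynomial (V ⊕ V) K}
    (hp : p ∈ cliqueIdeal K (A ∪ {j | c j = c i}) B c) :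
    p * X (Sum.inr i) ∈ cliqueIdeal K A B c ⊔ Ideal.span {X (Sum.inl i)} := by
  set J := cliqueIdeal K A B c ⊔ Ideal.span {X (Sum.inl i)}
  suffices h : cliqueIdeal K (A ∪ {j | c j = c i}) B c ≤ Submodule.colon J {X (Sum.inr i)} from
    Submodule.mem_colon_singleton.1 (h hp)
  refine cliqueIdeal_le_iff.2 ⟨fun j hj ↦ ?_, fun j hj ↦ ?_, fun j k hj hk hc ↦ ?_⟩ <;>
    rw [Submodule.mem_colon_singleton, smul_eq_mul]
  · by_cases hjA : j ∈ A
    · exact Ideal.mul_mem_right _ _ (Ideal.mem_sup_left (X_inl_mem_cliqueIdeal hjA))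
    · rw [show (X (Sum.inl j) * X (Sum.inr i) : MvPolynomial (V ⊕ V) K) =
        edgeMinor K j i + X (Sum.inl i) * X (Sum.inr j) by simp [edgeMinor]]
      exact add_mem
        (Ideal.mem_sup_left (edgeMinor_mem_cliqueIdeal hjA hi (hj.resolve_left hjA)))
        (Ideal.mul_mem_right _ _ (Ideal.mem_sup_right (Ideal.mem_span_singleton_self _)))
  · exact Ideal.mul_mem_right _ _ (Ideal.mem_sup_left (X_inr_mem_cliqueIdeal hj))
  · exact Ideal.mul_mem_right _ _ (Ideal.mem_sup_left (edgeMinor_mem_cliqueIdeal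
      (fun h ↦ hj (Or.inl h)) (fun h ↦ hk (Or.inl h)) hc))

theorem cliqueIdeal_sup_span_inl [Finite V] (hBA : B ⊆ A) (hi : i ∉ A) :
    cliqueIdeal K A B c ⊔ Ideal.span {X (Sum.inl i)} =
      cliqueIdeal K (A ∪ {j | c j = c i}) B c ⊓ cliqueIdeal K (insert i A) (insert i B) c := by
  have hBA' : B ⊆ A ∪ {j | c j = c i} := hBA.trans Set.subset_union_left
  have hJP : cliqueIdeal K A B c ⊔ Ideal.span {X (Sum.inl i)} ≤
      cliqueIdeal K (A ∪ {j | c j = c i}) B c := by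
    refine sup_le (cliqueIdeal_mono Set.subset_union_left subset_rfl ?_)
      ((Ideal.span_singleton_le_iff_mem _).2 (X_inl_mem_cliqueIdeal (Or.inr rfl)))
    rintro j k hj - (hj' | hj') hc
    exacts [absurd hj' hj, Or.inr (Or.inr (hc.symm.trans hj'))]
  have hP := cliqueIdeal_isPrime (K := K) (c := c) hBA'
  rw [← cliqueIdeal_sup_span_inl_sup_span_inr]
  exact le_antisymm (le_inf hJP le_sup_left) (inf_sup_span_singleton_le hJP
    (fun h ↦ hi (hBA ((X_inr_mem_cliqueIdeal_iff hBA').1 h)))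
    fun p hp ↦ mul_X_inr_mem_of_mem_cliqueIdeal hi hp)

theorem insert_subset_union_fiber : insert i A ⊆ A ∪ {j | c j = c i} :=
  Set.insert_subset (Or.inr rfl) Set.subset_union_left

theorem cliqueIdeal_sup_cliqueIdeal :
    cliqueIdeal K (A ∪ {j | c j = c i}) B c ⊔ cliqueIdeal K (insert i A) (insert i B) c =
      cliqueIdeal K (A ∪ {j | c j = c i}) (insert i B) c := by
  apply le_antisymm
  · refine sup_le (cliqueIdeal_mono subset_rfl (Set.subset_insert i B) ?_)
      (cliqueIdeal_mono insert_subset_union_fiber subset_rfl ?_)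
    · exact fun j k hj _ hj' _ ↦ absurd hj' hj
    · rintro j k hj - (hj' | hj') hc
      exacts [absurd (Or.inr hj') hj, Or.inr (Or.inr (hc.symm.trans hj'))]
  · exact cliqueIdeal_le_iff.2 ⟨fun j hj ↦ Ideal.mem_sup_left (X_inl_mem_cliqueIdeal hj),
      fun j hj ↦ Ideal.mem_sup_right (X_inr_mem_cliqueIdeal hj),
      fun j k hj hk h ↦ Ideal.mem_sup_left (edgeMinor_mem_cliqueIdeal hj hk h)⟩

theorem isSMulRegular_quotient_of_notMem {R : Type*} [CommRing R] {P : Ideal R} [hP : P.IsPrime]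
    {x : R} (hx : x ∉ P) : IsSMulRegular (R ⧸ P) x :=
  (isSMulRegular_quotient_iff_mem_of_smul_mem P x).2 fun _ h ↦ (hP.mem_or_mem h).resolve_left hx

theorem ncard_compl_insert [Finite V] {s : Set V} (hi : i ∉ s) :
    (insert i s)ᶜ.ncard + 1 = sᶜ.ncard := by
  have h := Set.ncard_add_ncard_compl s
  have h' := Set.ncard_add_ncard_compl (insert i s)
  rw [Set.ncard_insert_of_notMem hi] at h'
  omega

theorem ncard_compl_union_fiber_lt [Finite V] (hi : i ∉ A) :
    (A ∪ {j | c j = c i})ᶜ.ncard < Aᶜ.ncard :=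
  Set.ncard_lt_ncard (compl_lt_compl_iff_lt.2
    ((Set.ssubset_insert hi).trans_subset insert_subset_union_fiber))

theorem ncard_image_compl_union_fiber [Finite V] (hi : i ∉ A) :
    (c '' (A ∪ {j | c j = c i})ᶜ).ncard + 1 = (c '' Aᶜ).ncard := by
  have : c '' (A ∪ {j | c j = c i})ᶜ = c '' Aᶜ \ {c i} := by
    ext l
    constructor
    · rintro ⟨j, hj, rfl⟩
      exact ⟨⟨j, fun h ↦ hj (Or.inl h), rfl⟩, fun h ↦ hj (Or.inr h)⟩
    · rintro ⟨⟨j, hj, rfl⟩, h⟩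
      exact ⟨j, fun h' ↦ h'.elim hj h, rfl⟩
  rw [this]
  exact Set.ncard_sdiff_singleton_add_one ⟨i, hi, rfl⟩ (Set.toFinite _)

theorem image_compl_insert_of_eq {j : V} (hj : j ∉ A) (hji : j ≠ i) (hc : c j = c i) :
    c '' (insert i A)ᶜ = c '' Aᶜ := by
  refine subset_antisymm (Set.image_mono (Set.compl_subset_compl.2 (Set.subset_insert i A))) ?_
  rintro _ ⟨k, hk, rfl⟩
  by_cases hki : k = i
  · exact ⟨j, fun h ↦ h.elim hji hj, by rw [hki, hc]⟩
  · exact ⟨k, fun h ↦ h.elim hki hk, rfl⟩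

theorem union_fiber_eq_insert (h : ∀ j, j ∉ A → c j = c i → j = i) :
    A ∪ {j | c j = c i} = insert i A := by
  ext j
  refine ⟨?_, ?_⟩
  · rintro (hj | hj)
    · exact Or.inr hj
    · exact or_iff_not_imp_right.2 fun hjA ↦ h j hjA hj
  · rintro (rfl | hj)
    exacts [Or.inr rfl, Or.inl hj]

theorem depthGE_cliqueIdeal [Finite V] (hBA : B ⊆ A) {k : ℕ}
    (hk : k ≤ Bᶜ.ncard + (c '' Aᶜ).ncard) :
    DepthGE (idealOfVars (V ⊕ V) K) k (MvPolynomial (V ⊕ V) K ⧸ cliqueIdeal K A B c) := by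
  induction hd : Aᶜ.ncard + Bᶜ.ncard using Nat.strong_induction_on generalizing A B k with
  | _ d ih =>
  obtain _ | k := k
  · exact DepthGE.zero
  have hprime := cliqueIdeal_isPrime (K := K) (c := c) hBA
  obtain rfl | hA := eq_or_ne A Set.univ
  · simp only [Set.compl_univ, Set.image_empty, Set.ncard_empty] at hk
    obtain ⟨i, hi⟩ := Set.nonempty_of_ncard_ne_zero (s := Bᶜ) (by omega)
    have hBi := ncard_compl_insert hi
    refine DepthGE.quotient_of_sup_span (Ideal.subset_span ⟨Sum.inr i, rfl⟩)
      (isSMulRegular_quotient_of_notMem fun h ↦ hi ((X_inr_mem_cliqueIdeal_iff hBA).1 h)) ?_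
    rw [cliqueIdeal_sup_span_inr]
    exact ih _ (by omega) (Set.subset_univ _) (by omega) rfl
  obtain ⟨i, hi⟩ := (Set.ne_univ_iff_exists_notMem A).1 hA
  have hAi := ncard_compl_insert hi
  have hBi := ncard_compl_insert fun h ↦ hi (hBA h)
  have hfiber := ncard_image_compl_union_fiber (c := c) hi
  have hlt := ncard_compl_union_fiber_lt (c := c) hi
  refine DepthGE.quotient_of_sup_span (Ideal.subset_span ⟨Sum.inl i, rfl⟩)
    (isSMulRegular_quotient_of_notMem fun h ↦ hi ((X_inl_mem_cliqueIdeal_iff hBA).1 h)) ?_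
  rw [cliqueIdeal_sup_span_inl hBA hi]
  have hclass := ih _ (by omega) (A := A ∪ {j | c j = c i}) (k := k)
    (hBA.trans Set.subset_union_left) (by omega) rfl
  by_cases hsingle : ∀ j, j ∉ A → c j = c i → j = i
  · rwa [inf_eq_left.2]
    rw [union_fiber_eq_insert hsingle, ← cliqueIdeal_sup_span_inr]
    exact le_sup_left
  · push Not at hsingle
    obtain ⟨j, hj, hcj, hji⟩ := hsingle
    obtain _ | k := k
    · exact DepthGE.zero
    refine DepthGE.quotient_inf hclass
      (ih _ (by omega) (Set.insert_subset_insert hBA) ?_ rfl) ?_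
    · rw [image_compl_insert_of_eq hj hji hcj]
      omega
    · rw [cliqueIdeal_sup_cliqueIdeal]
      exact ih _ (by omega) ((Set.insert_subset_insert hBA).trans insert_subset_union_fiber)
        (by omega) rfl

end CliqueIdealDimension

section CliqueIdealHeight

variable {K : Type*} [Field K] {V ι : Type*} {A B : Set V} {c : V → ι}

theorem le_coheight_cliqueIdeal [Finite V] (hBA : B ⊆ A) :
    ((Bᶜ.ncard + (c '' Aᶜ).ncard : ℕ) : ℕ∞) ≤
      Order.coheight (⟨cliqueIdeal K A B c, cliqueIdeal_isPrime hBA⟩ : PrimeSpectrum _) := by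
  have hm := idealOfVars_isPrime (K := K) (V := V)
  obtain ⟨rs, hlen, hrs, hreg⟩ := (depthGE_cliqueIdeal (K := K) hBA le_rfl).exists_isRegular
    cliqueIdeal_le_idealOfVars hm.ne_top
  have htorsion : Ideal.torsionOf (MvPolynomial (V ⊕ V) K) _
      (Ideal.Quotient.mk (cliqueIdeal K A B c) 1) = cliqueIdeal K A B c := by
    ext r
    rw [mem_torsionOf_quotient_mk_iff, mul_one]
  rw [← hlen]
  exact length_le_coheight_of_isWeaklyRegular hrs hreg.toIsWeaklyRegular htorsion.ge
    (htorsion.le.trans cliqueIdeal_le_idealOfVars)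

open Classical in
/-- The labelling `c` changed so that the vertex `a` forms a class of its own. -/
def isolate (c : V → ι) (a : V) : V → Option ι :=
  Function.update (some ∘ c) a none

theorem isolate_self {a : V} : isolate c a a = none :=
  by classical exact Function.update_self ..

theorem isolate_of_ne {a i : V} (h : i ≠ a) : isolate c a i = some (c i) :=
  by classical exact Function.update_of_ne h ..

theorem cliqueIdeal_isolate_le {a : V} :
    cliqueIdeal K (A \ {a}) B (isolate c a) ≤ cliqueIdeal K A B c := by
  refine cliqueIdeal_le_iff.2 ⟨fun i hi ↦ X_inl_mem_cliqueIdeal hi.1,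
    fun i hi ↦ X_inr_mem_cliqueIdeal hi, fun i j hi hj h ↦ ?_⟩
  obtain rfl | hij := eq_or_ne i j
  · simp [edgeMinor]
  have hia : i ≠ a := by
    rintro rfl
    simp [isolate_self, isolate_of_ne hij.symm] at h
  have hja : j ≠ a := by
    rintro rfl
    simp [isolate_self, isolate_of_ne hij] at h
  rw [isolate_of_ne hia, isolate_of_ne hja, Option.some_inj] at h
  exact edgeMinor_mem_cliqueIdeal (fun hiA ↦ hi ⟨hiA, hia⟩) (fun hjA ↦ hj ⟨hjA, hja⟩) h

theorem ncard_image_isolate [Finite V] {a : V} :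
    (isolate c a '' (A \ {a})ᶜ).ncard = (c '' (insert a A)ᶜ).ncard + 1 := by
  have himage : isolate c a '' (A \ {a})ᶜ = insert none (some '' (c '' (insert a A)ᶜ)) := by
    ext l
    constructor
    · rintro ⟨i, hi, rfl⟩
      obtain rfl | hia := eq_or_ne i a
      · exact Or.inl isolate_self
      · exact Or.inr ⟨c i, ⟨i, fun h ↦ h.elim hia fun hiA ↦ hi ⟨hiA, hia⟩, rfl⟩,
          (isolate_of_ne hia).symm⟩
    · rintro (rfl | ⟨_, ⟨i, hi, rfl⟩, rfl⟩)
      · exact ⟨a, fun h ↦ h.2 rfl, isolate_self⟩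
      · exact ⟨i, fun h ↦ hi (Or.inr h.1), isolate_of_ne fun h ↦ hi (Or.inl h)⟩
  rw [himage, Set.ncard_insert_of_notMem (by simp) (Set.toFinite _),
    Set.ncard_image_of_injective _ (Option.some_injective _)]

theorem cliqueIdeal_sdiff_singleton_lt (hBA : B ⊆ A) {b : V} (hb : b ∈ B) :
    cliqueIdeal K A (B \ {b}) c < cliqueIdeal K A B c :=
  lt_of_le_of_ne (cliqueIdeal_mono subset_rfl Set.sdiff_subset fun _ _ hi _ hi' _ ↦ absurd hi' hi)
    fun h ↦ ((X_inr_mem_cliqueIdeal_iff (Set.sdiff_subset.trans hBA)).1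
      (h.ge (X_inr_mem_cliqueIdeal hb))).2 rfl

theorem cliqueIdeal_isolate_lt_of_mem (hBA : B ⊆ A) {a : V} (ha : a ∈ A) (haB : a ∉ B) :
    cliqueIdeal K (A \ {a}) B (isolate c a) < cliqueIdeal K A B c :=
  lt_of_le_of_ne cliqueIdeal_isolate_le fun h ↦
    ((X_inl_mem_cliqueIdeal_iff (Set.subset_sdiff_singleton hBA haB)).1
      (h.ge (X_inl_mem_cliqueIdeal ha))).2 rfl

theorem cliqueIdeal_isolate_lt_of_eq (hBA : B ⊆ A) {a b : V} (ha : a ∉ A) (hb : b ∉ A)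
    (hab : a ≠ b) (hc : c a = c b) :
    cliqueIdeal K (A \ {a}) B (isolate c a) < cliqueIdeal K A B c := by
  refine lt_of_le_of_ne cliqueIdeal_isolate_le fun h ↦ ?_
  have hmem := h.ge (edgeMinor_mem_cliqueIdeal ha hb hc)
  rw [edgeMinor_mem_cliqueIdeal_iff (Set.subset_sdiff_singleton hBA fun h ↦ ha (hBA h))
    (fun h ↦ ha h.1) (fun h ↦ hb h.1), isolate_self, isolate_of_ne hab.symm] at hmem
  exact Option.some_ne_none _ hmem.symm

theorem le_height_cliqueIdeal [Finite V] (hBA : B ⊆ A) {k : ℕ}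
    (hk : k + (c '' Aᶜ).ncard ≤ Nat.card V + B.ncard) :
    (k : ℕ∞) ≤
      Order.height (⟨cliqueIdeal K A B c, cliqueIdeal_isPrime hBA⟩ : PrimeSpectrum _) := by
  induction k generalizing ι A B c with
  | zero => simp
  | succ k ih =>
  suffices h : ∃ P : PrimeSpectrum (MvPolynomial (V ⊕ V) K),
      P.asIdeal < cliqueIdeal K A B c ∧ k ≤ Order.height P by
    obtain ⟨P, hlt, hP⟩ := h
    exact (by gcongr : (k : ℕ∞) + 1 ≤ Order.height P + 1).trans (Order.height_add_one_le hlt)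
  obtain ⟨b, hb⟩ | hB := B.eq_empty_or_nonempty.symm
  · have hcard := Set.ncard_sdiff_singleton_add_one hb
    exact ⟨_, cliqueIdeal_sdiff_singleton_lt hBA hb,
      ih (Set.sdiff_subset.trans hBA) (by omega)⟩
  have hB' (a : V) : a ∉ B := hB ▸ Set.notMem_empty a
  have hcard (a : V) := ncard_image_isolate (A := A) (c := c) (a := a)
  obtain ⟨a, ha⟩ | rfl := A.eq_empty_or_nonempty.symm
  · have hcard := Set.insert_eq_of_mem ha ▸ hcard a
    exact ⟨_, cliqueIdeal_isolate_lt_of_mem hBA ha (hB' a),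
      ih (Set.subset_sdiff_singleton hBA (hB' a)) (by omega)⟩
  obtain ⟨a, b, hc, hab⟩ : ∃ a b, c a = c b ∧ a ≠ b := by
    by_contra! hinj
    rw [Set.ncard_image_of_injective _ fun a b ↦ hinj a b, Set.compl_empty, Set.ncard_univ, hB,
      Set.ncard_empty] at hk
    omega
  have ha : a ∉ (∅ : Set V) := Set.notMem_empty a
  have hb : b ∉ (∅ : Set V) := Set.notMem_empty b
  have hcard := image_compl_insert_of_eq hb hab.symm hc.symm ▸ hcard a
  exact ⟨_, cliqueIdeal_isolate_lt_of_eq hBA ha hb hab hc,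
    ih (Set.subset_sdiff_singleton hBA (hB' a)) (by omega)⟩

theorem height_add_coheight_le {σ : Type*} [Finite σ] (P : PrimeSpectrum (MvPolynomial σ K)) :
    Order.height P + Order.coheight P ≤ Nat.card σ := by
  have hdim : ringKrullDim (MvPolynomial σ K) = Nat.card σ := by
    rw [MvPolynomial.ringKrullDim_of_isNoetherianRing, ringKrullDim_eq_zero_of_field, zero_add]
  rw [ringKrullDim, Order.krullDim_eq_iSup_height_add_coheight_of_nonempty] at hdim
  exact WithBot.coe_le_coe.1 ((WithBot.coe_le_coe.2 (le_iSup (fun P ↦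
    Order.height P + Order.coheight P) P)).trans hdim.le)

theorem eq_natCast_of_add_le_of_le {a b : ℕ∞} {m n : ℕ} (h : a + b ≤ (m + n : ℕ)) (ha : m ≤ a)
    (hb : n ≤ b) : a = m ∧ b = n := by
  lift a to ℕ using (by rintro rfl; simp at h)
  lift b to ℕ using (by rintro rfl; simp at h)
  norm_cast at *
  omega

theorem height_and_coheight_cliqueIdeal [Finite V] (hBA : B ⊆ A) {k : ℕ}
    (hk : k + (c '' Aᶜ).ncard = Nat.card V + B.ncard) :
    Order.height (⟨cliqueIdeal K A B c, cliqueIdeal_isPrime hBA⟩ : PrimeSpectrum _) = k ∧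
      Order.coheight (⟨cliqueIdeal K A B c, cliqueIdeal_isPrime hBA⟩ : PrimeSpectrum _) =
        (Bᶜ.ncard + (c '' Aᶜ).ncard : ℕ) := by
  refine eq_natCast_of_add_le_of_le ((height_add_coheight_le _).trans ?_)
    (le_height_cliqueIdeal hBA hk.le) (le_coheight_cliqueIdeal hBA)
  have := Set.ncard_add_ncard_compl B
  rw [Nat.cast_le, Nat.card_sum]
  omega

end CliqueIdealHeight

section VertexDeletion

variable (K : Type*) [Field K] {V : Type*}

/-- The extension to `K[x_i, y_i : i ∈ V]` of the binomial edge ideal of `G` with the vertices in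
`T` removed, together with the variables `x_i, y_i` of the removed vertices. -/
def vertexDeletionIdeal (T : Set V) (G : SimpleGraph V) : Ideal (MvPolynomial (V ⊕ V) K) :=
  Ideal.span ({ f | ∃ i ∈ T, f = X (Sum.inl i) ∨ f = X (Sum.inr i) } ∪
    { f | ∃ i j, G.Adj i j ∧ f = edgeMinor K i j })

/-- The graph obtained from `G` by joining any two neighbours of `v`. -/
def completeAt (G : SimpleGraph V) (v : V) : SimpleGraph V where
  Adj i j := i ≠ j ∧ (G.Adj i j ∨ G.Adj i v ∧ G.Adj v j)
  symm := ⟨fun _ _ h ↦ ⟨h.1.symm, h.2.imp (·.symm) fun h ↦ ⟨h.2.symm, h.1.symm⟩⟩⟩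
  loopless := ⟨fun _ h ↦ h.1 rfl⟩

open Classical in
/-- The retraction of `K[x_i, y_i : i ∈ V]` that sets `x_v` and `y_v` to zero. -/
def killVertex (v : V) : MvPolynomial (V ⊕ V) K →ₐ[K] MvPolynomial (V ⊕ V) K :=
  aeval fun w ↦ if w = Sum.inl v ∨ w = Sum.inr v then 0 else X w

variable {K} {T T' : Set V} {G G' : SimpleGraph V} {v : V}

theorem X_inl_mem_vertexDeletionIdeal {i : V} (hi : i ∈ T) :
    X (Sum.inl i) ∈ vertexDeletionIdeal K T G :=
  Ideal.subset_span (Or.inl ⟨i, hi, Or.inl rfl⟩)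

theorem X_inr_mem_vertexDeletionIdeal {i : V} (hi : i ∈ T) :
    X (Sum.inr i) ∈ vertexDeletionIdeal K T G :=
  Ideal.subset_span (Or.inl ⟨i, hi, Or.inr rfl⟩)

theorem edgeMinor_mem_vertexDeletionIdeal {i j : V} (h : G.Adj i j) :
    edgeMinor K i j ∈ vertexDeletionIdeal K T G :=
  Ideal.subset_span (Or.inr ⟨i, j, h, rfl⟩)

theorem vertexDeletionIdeal_le_iff {I : Ideal (MvPolynomial (V ⊕ V) K)} :
    vertexDeletionIdeal K T G ≤ I ↔ (∀ i ∈ T, X (Sum.inl i) ∈ I ∧ X (Sum.inr i) ∈ I) ∧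
      ∀ i j, G.Adj i j → edgeMinor K i j ∈ I := by
  constructor
  · intro h
    exact ⟨fun i hi ↦ ⟨h (X_inl_mem_vertexDeletionIdeal hi), h (X_inr_mem_vertexDeletionIdeal hi)⟩,
      fun i j hij ↦ h (edgeMinor_mem_vertexDeletionIdeal hij)⟩
  · rintro ⟨hX, hminor⟩
    refine Ideal.span_le.2 ?_
    rintro f (⟨i, hi, rfl | rfl⟩ | ⟨i, j, hij, rfl⟩)
    exacts [(hX i hi).1, (hX i hi).2, hminor i j hij]

theorem vertexDeletionIdeal_empty : vertexDeletionIdeal K ∅ G = binomialEdgeIdeal K G := by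
  simp [vertexDeletionIdeal, binomialEdgeIdeal, edgeMinor]

theorem vertexDeletionIdeal_mono (hT : T ⊆ T') (hG : G ≤ G') :
    vertexDeletionIdeal K T G ≤ vertexDeletionIdeal K T' G' :=
  vertexDeletionIdeal_le_iff.2
    ⟨fun _ hi ↦ ⟨X_inl_mem_vertexDeletionIdeal (hT hi), X_inr_mem_vertexDeletionIdeal (hT hi)⟩,
      fun _ _ hij ↦ edgeMinor_mem_vertexDeletionIdeal (hG hij)⟩

theorem vertexDeletionIdeal_sup :
    vertexDeletionIdeal K T G ⊔ vertexDeletionIdeal K T' G' =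
      vertexDeletionIdeal K (T ∪ T') (G ⊔ G') := by
  refine le_antisymm (sup_le (vertexDeletionIdeal_mono Set.subset_union_left le_sup_left)
    (vertexDeletionIdeal_mono Set.subset_union_right le_sup_right)) ?_
  refine vertexDeletionIdeal_le_iff.2 ⟨?_, ?_⟩
  · rintro i (hi | hi)
    · exact ⟨Ideal.mem_sup_left (X_inl_mem_vertexDeletionIdeal hi),
        Ideal.mem_sup_left (X_inr_mem_vertexDeletionIdeal hi)⟩
    · exact ⟨Ideal.mem_sup_right (X_inl_mem_vertexDeletionIdeal hi),
        Ideal.mem_sup_right (X_inr_mem_vertexDeletionIdeal hi)⟩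
  · rintro i j (hij | hij)
    · exact Ideal.mem_sup_left (edgeMinor_mem_vertexDeletionIdeal hij)
    · exact Ideal.mem_sup_right (edgeMinor_mem_vertexDeletionIdeal hij)

theorem le_completeAt : G ≤ completeAt G v :=
  fun _ _ h ↦ ⟨h.ne, Or.inl h⟩

theorem vertexDeletionIdeal_completeAt_sup :
    vertexDeletionIdeal K T (completeAt G v) ⊔ vertexDeletionIdeal K (insert v T) G =
      vertexDeletionIdeal K (insert v T) (completeAt G v) := by
  rw [vertexDeletionIdeal_sup, Set.union_eq_right.2 (Set.subset_insert v T),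
    sup_eq_left.2 le_completeAt]

theorem killVertex_X_self_inl : killVertex K v (X (Sum.inl v)) = 0 := by
  simp [killVertex]

theorem killVertex_X_self_inr : killVertex K v (X (Sum.inr v)) = 0 := by
  simp [killVertex]

theorem killVertex_X_of_ne {w : V ⊕ V} (hl : w ≠ Sum.inl v) (hr : w ≠ Sum.inr v) :
    killVertex K v (X w) = X w := by
  simp [killVertex, hl, hr]

theorem killVertex_X_eq_zero_or_eq (w : V ⊕ V) :
    killVertex K v (X w) = 0 ∨ killVertex K v (X w) = X w := by
  simp only [killVertex, aeval_X]
  split_ifs <;> simp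

theorem killVertex_edgeMinor_eq_zero {i j : V} (h : i = v ∨ j = v) :
    killVertex K v (edgeMinor K i j) = 0 := by
  rcases h with rfl | rfl <;>
    simp [edgeMinor, killVertex_X_self_inl, killVertex_X_self_inr]

theorem killVertex_edgeMinor_of_ne {i j : V} (hi : i ≠ v) (hj : j ≠ v) :
    killVertex K v (edgeMinor K i j) = edgeMinor K i j := by
  have kill_inl {l : V} (hl : l ≠ v) : killVertex K v (X (Sum.inl l)) = X (Sum.inl l) :=
    killVertex_X_of_ne (Sum.inl_injective.ne hl) Sum.inl_ne_inr
  have kill_inr {l : V} (hl : l ≠ v) : killVertex K v (X (Sum.inr l)) = X (Sum.inr l) :=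
    killVertex_X_of_ne Sum.inr_ne_inl (Sum.inr_injective.ne hl)
  simp only [edgeMinor, map_sub, map_mul, kill_inl hi, kill_inl hj, kill_inr hi, kill_inr hj]

theorem sub_killVertex_mem (f : MvPolynomial (V ⊕ V) K) :
    f - killVertex K v f ∈ Ideal.span {X (Sum.inl v), X (Sum.inr v)} := by
  rw [← Ideal.Quotient.eq]
  have hcomp : Ideal.Quotient.mkₐ K (Ideal.span {X (Sum.inl v), X (Sum.inr v)}) =
      (Ideal.Quotient.mkₐ K _).comp (killVertex K v) := by
    ext w
    by_cases hw : w = Sum.inl v ∨ w = Sum.inr v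
    · have hkill : killVertex K v (X w) = 0 := by simp [killVertex, hw]
      rw [AlgHom.comp_apply, hkill, map_zero]
      refine Ideal.Quotient.eq_zero_iff_mem.2 (Ideal.subset_span ?_)
      exact hw.imp (congrArg X) (congrArg X)
    · rw [not_or] at hw
      rw [AlgHom.comp_apply, killVertex_X_of_ne hw.1 hw.2]
  exact DFunLike.congr_fun hcomp f

theorem span_inf_le_of_retraction {R : Type*} [CommRing R] {s : Set R} {A B D J : Ideal R}
    (hA : A = Ideal.span s) (ρ : R →+* R) (hρ : ∀ a, a - ρ a ∈ D) (hs : ∀ a ∈ s, a - ρ a ∈ J)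
    (hAD : A * D ≤ J) (hB : B ≤ J.comap ρ) : A ⊓ B ≤ J := by
  have sub_mem_of_mem_span (a : R) (ha : a ∈ A) : a - ρ a ∈ J := by
    subst hA
    induction ha using Submodule.span_induction with
    | mem a ha => exact hs a ha
    | zero => simp
    | add a b _ _ ha hb =>
      rw [map_add, add_sub_add_comm]
      exact add_mem ha hb
    | smul h a ha hJ =>
      rw [smul_eq_mul, map_mul, show h * a - ρ h * ρ a = a * (h - ρ h) + ρ h * (a - ρ a) by ring]
      exact add_mem (hAD (Ideal.mul_mem_mul ha (hρ h))) (Ideal.mul_mem_left _ _ hJ)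
  rintro a ⟨ha, haB⟩
  rw [← sub_add_cancel a (ρ a)]
  exact add_mem (sub_mem_of_mem_span a ha) (hB haB)

theorem sub_killVertex_mem_vertexDeletionIdeal {f : MvPolynomial (V ⊕ V) K}
    (hf : f ∈ { f | ∃ i ∈ T, f = X (Sum.inl i) ∨ f = X (Sum.inr i) } ∪
      { f | ∃ i j, (completeAt G v).Adj i j ∧ f = edgeMinor K i j }) :
    f - killVertex K v f ∈ vertexDeletionIdeal K T G := by
  have X_sub_mem (w : V ⊕ V) (hw : X w ∈ vertexDeletionIdeal K T G) :
      X w - killVertex K v (X w) ∈ vertexDeletionIdeal K T G := by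
    rcases killVertex_X_eq_zero_or_eq (K := K) (v := v) w with h | h <;> simp [h, hw]
  rcases hf with ⟨i, hi, rfl | rfl⟩ | ⟨i, j, hij, rfl⟩
  · exact X_sub_mem _ (X_inl_mem_vertexDeletionIdeal hi)
  · exact X_sub_mem _ (X_inr_mem_vertexDeletionIdeal hi)
  by_cases hv : i = v ∨ j = v
  · have hij' : G.Adj i j := by
      rcases hv with rfl | rfl
      exacts [hij.2.elim id And.right, hij.2.elim id And.left]
    rw [killVertex_edgeMinor_eq_zero hv, sub_zero]
    exact edgeMinor_mem_vertexDeletionIdeal hij'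
  · rw [not_or] at hv
    simp [killVertex_edgeMinor_of_ne hv.1 hv.2]

theorem vertexDeletionIdeal_completeAt_mul_span_le :
    vertexDeletionIdeal K T (completeAt G v) * Ideal.span {X (Sum.inl v), X (Sum.inr v)} ≤
      vertexDeletionIdeal K T G := by
  rw [vertexDeletionIdeal, Ideal.span_mul_span', Ideal.span_le]
  rintro _ ⟨f, ⟨i, hi, rfl | rfl⟩ | ⟨i, j, ⟨-, hij | ⟨hiv, hvj⟩⟩, rfl⟩, w, hw, rfl⟩
  · exact Ideal.mul_mem_right _ _ (X_inl_mem_vertexDeletionIdeal hi)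
  · exact Ideal.mul_mem_right _ _ (X_inr_mem_vertexDeletionIdeal hi)
  · exact Ideal.mul_mem_right _ _ (edgeMinor_mem_vertexDeletionIdeal hij)
  have hiv' := edgeMinor_mem_vertexDeletionIdeal (K := K) (T := T) hiv
  have hvj' := edgeMinor_mem_vertexDeletionIdeal (K := K) (T := T) hvj
  rcases hw with rfl | rfl
  · have hplucker : edgeMinor K i j * X (Sum.inl v) =
        X (Sum.inl i) * edgeMinor K v j + X (Sum.inl j) * edgeMinor K i v := by
      simp only [edgeMinor]
      ring
    change edgeMinor K i j * _ ∈ vertexDeletionIdeal K T G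
    rw [hplucker]
    exact add_mem (Ideal.mul_mem_left _ _ hvj') (Ideal.mul_mem_left _ _ hiv')
  · have hplucker : edgeMinor K i j * X (Sum.inr v) =
        X (Sum.inr i) * edgeMinor K v j + X (Sum.inr j) * edgeMinor K i v := by
      simp only [edgeMinor]
      ring
    change edgeMinor K i j * _ ∈ vertexDeletionIdeal K T G
    rw [hplucker]
    exact add_mem (Ideal.mul_mem_left _ _ hvj') (Ideal.mul_mem_left _ _ hiv')

theorem vertexDeletionIdeal_insert_le_comap_killVertex :
    vertexDeletionIdeal K (insert v T) G ≤
      (vertexDeletionIdeal K T G).comap (killVertex K v).toRingHom := by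
  refine vertexDeletionIdeal_le_iff.2 ⟨?_, fun i j hij ↦ ?_⟩
  · rintro i (rfl | hi)
    · simp [killVertex_X_self_inl, killVertex_X_self_inr]
    · have kill_mem (w : V ⊕ V) (hw : X w ∈ vertexDeletionIdeal K T G) :
          killVertex K v (X w) ∈ vertexDeletionIdeal K T G := by
        rcases killVertex_X_eq_zero_or_eq (K := K) (v := v) w with h | h <;> simp [h, hw]
      exact ⟨kill_mem _ (X_inl_mem_vertexDeletionIdeal hi),
        kill_mem _ (X_inr_mem_vertexDeletionIdeal hi)⟩
  · change killVertex K v (edgeMinor K i j) ∈ vertexDeletionIdeal K T G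
    by_cases hv : i = v ∨ j = v
    · simp [killVertex_edgeMinor_eq_zero hv]
    · rw [not_or] at hv
      rw [killVertex_edgeMinor_of_ne hv.1 hv.2]
      exact edgeMinor_mem_vertexDeletionIdeal hij

theorem vertexDeletionIdeal_eq_inf (T : Set V) (G : SimpleGraph V) (v : V) :
    vertexDeletionIdeal K T G =
      vertexDeletionIdeal K T (completeAt G v) ⊓ vertexDeletionIdeal K (insert v T) G := by
  refine le_antisymm (le_inf (vertexDeletionIdeal_mono subset_rfl le_completeAt)
    (vertexDeletionIdeal_mono (Set.subset_insert v T) le_rfl)) ?_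
  exact span_inf_le_of_retraction rfl (killVertex K v).toRingHom sub_killVertex_mem
    (fun _ ↦ sub_killVertex_mem_vertexDeletionIdeal) vertexDeletionIdeal_completeAt_mul_span_le
    vertexDeletionIdeal_insert_le_comap_killVertex

end VertexDeletion

section Simplicial

variable {V : Type*} {G : SimpleGraph V} {T T' : Set V} {v w : V}

/-- `v` is a simplicial vertex of `G - T` or lies in `T`: its neighbours outside `T` form a clique.
Vertices of `T` are included so that the property is inherited by larger `T`. -/
def IsSimplicialOutside (T : Set V) (G : SimpleGraph V) (v : V) : Prop :=
  v ∉ T → ∀ i j, i ∉ T → j ∉ T → i ≠ j → G.Adj i v → G.Adj v j → G.Adj i j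

namespace IsSimplicialOutside

theorem mono (h : IsSimplicialOutside T G v) (hT : T ⊆ T') : IsSimplicialOutside T' G v :=
  fun hv i j hi hj ↦ h (fun hvT ↦ hv (hT hvT)) i j (fun hiT ↦ hi (hT hiT)) (fun hjT ↦ hj (hT hjT))

theorem of_mem (hv : v ∈ T) : IsSimplicialOutside T G v :=
  fun hvT ↦ absurd hv hvT

theorem completeAt_self : IsSimplicialOutside T (completeAt G v) v :=
  fun _ _ _ _ _ hij hiv hvj ↦
    ⟨hij, Or.inr ⟨hiv.2.elim id And.left, hvj.2.elim id And.right⟩⟩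

theorem completeAt (h : IsSimplicialOutside T G v) (hw : w ∉ T) :
    IsSimplicialOutside T (completeAt G w) v := by
  rintro hv i j hi hj hij ⟨-, hiv | ⟨hiw, hwv⟩⟩ ⟨-, hvj | ⟨hvw, hwj⟩⟩
  · exact ⟨hij, Or.inl (h hv i j hi hj hij hiv hvj)⟩
  · rcases eq_or_ne i w with rfl | hiw
    · exact ⟨hij, Or.inl hwj⟩
    · exact ⟨hij, Or.inr ⟨h hv i w hi hw hiw hiv hvw, hwj⟩⟩
  · rcases eq_or_ne w j with rfl | hwj
    · exact ⟨hij, Or.inl hiw⟩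
    · exact ⟨hij, Or.inr ⟨hiw, h hv w j hw hj hwj hwv hvj⟩⟩
  · exact ⟨hij, Or.inr ⟨hiw, hwj⟩⟩

theorem reachable_induce_iff (h : ∀ v, IsSimplicialOutside T G v) {i j : V} (hi : i ∈ Tᶜ)
    (hj : j ∈ Tᶜ) : (G.induce Tᶜ).Reachable ⟨i, hi⟩ ⟨j, hj⟩ ↔ i = j ∨ G.Adj i j := by
  constructor
  · intro hreach
    rw [SimpleGraph.reachable_iff_reflTransGen] at hreach
    suffices ∀ b : ↥Tᶜ, Relation.ReflTransGen (G.induce Tᶜ).Adj ⟨i, hi⟩ b →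
        i = b ∨ G.Adj i b from this _ hreach
    intro b hb
    induction hb with
    | refl => exact Or.inl rfl
    | @tail b d _ hbd ih =>
      rcases ih with rfl | hib
      · exact Or.inr hbd
      · exact or_iff_not_imp_left.2 fun hid ↦ h b b.2 i d hi d.2 hid hib hbd
  · rintro (rfl | hij)
    · rfl
    · exact SimpleGraph.Adj.reachable (G := G.induce Tᶜ) hij

end IsSimplicialOutside

theorem reachable_induce_completeAt_iff (hv : v ∉ T) {i j : ↥Tᶜ} :
    ((completeAt G v).induce Tᶜ).Reachable i j ↔ (G.induce Tᶜ).Reachable i j := by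
  refine ⟨?_, .mono fun _ _ h ↦ le_completeAt h⟩
  rintro ⟨walk⟩
  induction walk with
  | nil => rfl
  | cons hadj _ ih =>
    refine SimpleGraph.Reachable.trans ?_ ih
    rcases hadj.2 with h | ⟨hiv, hvj⟩
    · exact SimpleGraph.Adj.reachable (G := G.induce Tᶜ) h
    · exact (SimpleGraph.Adj.reachable (G := G.induce Tᶜ) (v := ⟨v, hv⟩) hiv).trans
        (SimpleGraph.Adj.reachable (G := G.induce Tᶜ) (u := ⟨v, hv⟩) hvj)

open Classical in
/-- The connected component of `G - T` containing a vertex, as a labelling of all the vertices;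
the vertices of `T` receive the label `none`. -/
def componentLabel (G : SimpleGraph V) (T : Set V) (i : V) :
    Option (G.induce Tᶜ).ConnectedComponent :=
  if hi : i ∈ Tᶜ then some ((G.induce Tᶜ).connectedComponentMk ⟨i, hi⟩) else none

theorem componentLabel_of_notMem {i : V} (hi : i ∈ Tᶜ) :
    componentLabel G T i = some ((G.induce Tᶜ).connectedComponentMk ⟨i, hi⟩) :=
  dif_pos hi

theorem componentLabel_eq_iff {i j : V} (hi : i ∈ Tᶜ) (hj : j ∈ Tᶜ) :
    componentLabel G T i = componentLabel G T j ↔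
      (G.induce Tᶜ).Reachable ⟨i, hi⟩ ⟨j, hj⟩ := by
  rw [componentLabel_of_notMem hi, componentLabel_of_notMem hj, Option.some_inj,
    SimpleGraph.ConnectedComponent.eq]

theorem componentLabel_eq_iff_eq_or_adj (h : ∀ v, IsSimplicialOutside T G v) {i j : V}
    (hi : i ∈ Tᶜ) (hj : j ∈ Tᶜ) :
    componentLabel G T i = componentLabel G T j ↔ i = j ∨ G.Adj i j := by
  rw [componentLabel_eq_iff hi hj, IsSimplicialOutside.reachable_induce_iff h]

theorem ncard_componentLabel_image (G : SimpleGraph V) (T : Set V) :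
    (componentLabel G T '' Tᶜ).ncard = Nat.card (G.induce Tᶜ).ConnectedComponent := by
  have himage : componentLabel G T '' Tᶜ = Set.range some := by
    ext x
    constructor
    · rintro ⟨i, hi, rfl⟩
      exact ⟨_, (componentLabel_of_notMem hi).symm⟩
    · rintro ⟨C, rfl⟩
      obtain ⟨i, rfl⟩ := C.exists_rep
      exact ⟨i, i.2, componentLabel_of_notMem i.2⟩
  rw [himage, ← Set.image_univ, Set.ncard_image_of_injective _ (Option.some_injective _),
    Set.ncard_univ]

/-- The graph obtained from `G` by completing successively at the vertices of a list. -/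
def completeAlong : List V → SimpleGraph V → SimpleGraph V
  | [], G => G
  | v :: vs, G => completeAlong vs (completeAt G v)

theorem mem_or_isSimplicialOutside_of_cons {vs : List V} {G' : SimpleGraph V}
    (h : ∀ v, v ∈ w :: vs ∨ IsSimplicialOutside T G v) (hw : IsSimplicialOutside T' G' w)
    (hmono : ∀ v, IsSimplicialOutside T G v → IsSimplicialOutside T' G' v) (v : V) :
    v ∈ vs ∨ IsSimplicialOutside T' G' v := by
  rcases h v with hv | hv
  · rcases List.mem_cons.1 hv with rfl | hvs
    exacts [Or.inr hw, Or.inl hvs]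
  · exact Or.inr (hmono v hv)

theorem isSimplicialOutside_completeAlong {vs : List V} (hvs : ∀ v ∈ vs, v ∉ T)
    (h : ∀ v, v ∈ vs ∨ IsSimplicialOutside T G v) (v : V) :
    IsSimplicialOutside T (completeAlong vs G) v := by
  induction vs generalizing G with
  | nil => exact (h v).resolve_left List.not_mem_nil
  | cons w vs ih =>
    rw [List.forall_mem_cons] at hvs
    exact ih hvs.2 (mem_or_isSimplicialOutside_of_cons h .completeAt_self
      fun _ hu ↦ hu.completeAt hvs.1)

theorem reachable_induce_completeAlong_iff {vs : List V} (hvs : ∀ v ∈ vs, v ∉ T) {i j : ↥Tᶜ} :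
    ((completeAlong vs G).induce Tᶜ).Reachable i j ↔ (G.induce Tᶜ).Reachable i j := by
  induction vs generalizing G with
  | nil => rfl
  | cons w vs ih =>
    rw [List.forall_mem_cons] at hvs
    rw [completeAlong, ih hvs.2, reachable_induce_completeAt_iff hvs.1]

theorem reachable_induce_iff_completeAlong {vs : List V} (hvs : ∀ v, v ∈ vs ↔ v ∉ T) {i j : V}
    (hi : i ∈ Tᶜ) (hj : j ∈ Tᶜ) :
    (G.induce Tᶜ).Reachable ⟨i, hi⟩ ⟨j, hj⟩ ↔ i = j ∨ (completeAlong vs G).Adj i j := by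
  rw [← reachable_induce_completeAlong_iff fun v ↦ (hvs v).1]
  refine IsSimplicialOutside.reachable_induce_iff
    (isSimplicialOutside_completeAlong (fun v ↦ (hvs v).1) fun v ↦ ?_) hi hj
  exact (em (v ∈ T)).symm.imp (hvs v).2 .of_mem

end Simplicial

section DepthBound

variable {K : Type*} [Field K] {V : Type*} {G : SimpleGraph V} {T : Set V}

theorem vertexDeletionIdeal_le_cliqueIdeal :
    vertexDeletionIdeal K T G ≤ cliqueIdeal K T T (componentLabel G T) := by
  refine vertexDeletionIdeal_le_iff.2
    ⟨fun i hi ↦ ⟨X_inl_mem_cliqueIdeal hi, X_inr_mem_cliqueIdeal hi⟩, fun i j hij ↦ ?_⟩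
  by_cases hi : i ∈ T
  · exact edgeMinor_mem_of_X_mem (X_inl_mem_cliqueIdeal hi) (X_inr_mem_cliqueIdeal hi)
  by_cases hj : j ∈ T
  · rw [edgeMinor_swap]
    exact neg_mem (edgeMinor_mem_of_X_mem (X_inl_mem_cliqueIdeal hj) (X_inr_mem_cliqueIdeal hj))
  · exact edgeMinor_mem_cliqueIdeal hi hj
      ((componentLabel_eq_iff hi hj).2 (SimpleGraph.Adj.reachable (G := G.induce Tᶜ) hij))

theorem vertexDeletionIdeal_eq_cliqueIdeal (h : ∀ v, IsSimplicialOutside T G v) :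
    vertexDeletionIdeal K T G = cliqueIdeal K T T (componentLabel G T) := by
  refine le_antisymm vertexDeletionIdeal_le_cliqueIdeal ?_
  refine cliqueIdeal_le_iff.2 ⟨fun i hi ↦ X_inl_mem_vertexDeletionIdeal hi,
    fun i hi ↦ X_inr_mem_vertexDeletionIdeal hi, fun i j hi hj hij ↦ ?_⟩
  rcases (componentLabel_eq_iff_eq_or_adj h hi hj).1 hij with rfl | hadj
  · simp [edgeMinor]
  · exact edgeMinor_mem_vertexDeletionIdeal hadj

theorem isRadical_vertexDeletionIdeal_of_forall_mem_or [Finite V] (vs : List V) (T : Set V)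
    (G : SimpleGraph V) (h : ∀ v, v ∈ vs ∨ IsSimplicialOutside T G v) :
    (vertexDeletionIdeal K T G).IsRadical := by
  induction vs generalizing T G with
  | nil =>
    rw [vertexDeletionIdeal_eq_cliqueIdeal fun v ↦ (h v).resolve_left List.not_mem_nil]
    exact (cliqueIdeal_isPrime subset_rfl).isRadical
  | cons w vs ih =>
    by_cases hwT : w ∈ T
    · exact ih T G (mem_or_isSimplicialOutside_of_cons h (.of_mem hwT) fun _ ↦ id)
    · rw [vertexDeletionIdeal_eq_inf T G w]
      refine (ih _ _ ?_).inf (ih _ _ ?_)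
      · exact mem_or_isSimplicialOutside_of_cons h .completeAt_self fun _ hv ↦ hv.completeAt hwT
      · exact mem_or_isSimplicialOutside_of_cons h (.of_mem (Set.mem_insert w T))
          fun _ hv ↦ hv.mono (Set.subset_insert w T)

theorem isRadical_vertexDeletionIdeal [Finite V] (T : Set V) (G : SimpleGraph V) :
    (vertexDeletionIdeal K T G).IsRadical :=
  have := Fintype.ofFinite V
  isRadical_vertexDeletionIdeal_of_forall_mem_or Finset.univ.toList T G
    fun v ↦ Or.inl (Finset.mem_toList.2 (Finset.mem_univ v))

section Decidable

variable [DecidableEq V]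

instance decidableRelCompleteAtAdj (G : SimpleGraph V) [DecidableRel G.Adj] (v : V) :
    DecidableRel (completeAt G v).Adj :=
  fun i j ↦ inferInstanceAs (Decidable (i ≠ j ∧ (G.Adj i j ∨ G.Adj i v ∧ G.Adj v j)))

instance decidableRelCompleteAlongAdj (vs : List V) (G : SimpleGraph V) [h : DecidableRel G.Adj] :
    DecidableRel (completeAlong vs G).Adj :=
  match vs with
  | [] => h
  | v :: vs => decidableRelCompleteAlongAdj vs (completeAt G v)

instance decidableIsSimplicialOutside [Fintype V] (T : Finset V) (G : SimpleGraph V)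
    [DecidableRel G.Adj] (v : V) : Decidable (IsSimplicialOutside T G v) :=
  inferInstanceAs (Decidable
    (v ∉ (T : Set V) → ∀ i j, i ∉ (T : Set V) → j ∉ (T : Set V) → i ≠ j →
      G.Adj i v → G.Adj v j → G.Adj i j))

end Decidable

variable [LinearOrder V] [Fintype V]

/-- The vertices of `G - T` without smaller neighbours in `G - T`. When `G - T` is a disjoint union
of cliques, these represent its connected components. -/
def cliqueMinima (T : Finset V) (G : SimpleGraph V) [DecidableRel G.Adj] : Finset V :=
  {i | i ∉ T ∧ ∀ j < i, j ∉ T → ¬G.Adj j i}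

theorem card_cliqueMinima {ι : Type*} {T : Finset V} [DecidableRel G.Adj] {c : V → ι}
    (hc : ∀ i ∉ T, ∀ j ∉ T, c i = c j ↔ i = j ∨ G.Adj i j) :
    (cliqueMinima T G).card = (c '' (T : Set V)ᶜ).ncard := by
  have hmin : c '' (T : Set V)ᶜ = c '' cliqueMinima T G := by
    refine subset_antisymm ?_ (Set.image_mono fun i hi ↦ (Finset.mem_filter.1 hi).2.1)
    rintro _ ⟨i, hi, rfl⟩
    obtain ⟨m, ⟨hmT, hmi⟩, hm⟩ := wellFounded_lt.has_min {j | j ∉ T ∧ c j = c i} ⟨i, hi, rfl⟩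
    refine ⟨m, Finset.mem_filter.2 ⟨Finset.mem_univ m, hmT, fun j hj hjT hadj ↦ ?_⟩, hmi⟩
    exact hm j ⟨hjT, ((hc j hjT m hmT).2 (Or.inr hadj)).trans hmi⟩ hj
  rw [hmin, Set.InjOn.ncard_image, Set.ncard_coe_finset]
  intro i hi j hj hij
  obtain ⟨-, hiT, hi⟩ := Finset.mem_filter.1 hi
  obtain ⟨-, hjT, hj⟩ := Finset.mem_filter.1 hj
  refine ((hc i hiT j hjT).1 hij).elim id fun hadj ↦ ?_
  rcases lt_trichotomy i j with hlt | heq | hgt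
  exacts [absurd hadj (hj i hlt hiT), heq, absurd hadj.symm (hi j hgt hjT)]

/-- The lower bound for the depth of `S / vertexDeletionIdeal K T G` that results from applying
Ohtani's decomposition `vertexDeletionIdeal_eq_inf` and the depth lemma at the successive vertices
of a list, until disjoint unions of cliques are reached. -/
def depthBound : List V → Finset V → (G : SimpleGraph V) → [DecidableRel G.Adj] → ℕ
  | [], T, G, _ => Tᶜ.card + (cliqueMinima T G).card
  | v :: vs, T, G, _ =>
    if IsSimplicialOutside T G v then depthBound vs T G
    else min (depthBound vs T (completeAt G v))
      (min (depthBound vs (insert v T) G) (depthBound vs (insert v T) (completeAt G v) + 1))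

theorem DepthGE.min_quotient_inf {R : Type*} [CommRing R] {m A B : Ideal R} {a b d : ℕ}
    (hA : DepthGE m a (R ⧸ A)) (hB : DepthGE m b (R ⧸ B)) (hAB : DepthGE m d (R ⧸ A ⊔ B)) :
    DepthGE m (min a (min b (d + 1))) (R ⧸ A ⊓ B) := by
  rcases h : min a (min b (d + 1)) with _ | k
  · exact .zero
  · exact .quotient_inf (hA.mono (by lia)) (hB.mono (by lia)) (hAB.mono (by lia))

theorem depthGE_vertexDeletionIdeal (vs : List V) (T : Finset V) (G : SimpleGraph V)
    [DecidableRel G.Adj] (h : ∀ v, v ∈ vs ∨ IsSimplicialOutside T G v) :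
    DepthGE (idealOfVars (V ⊕ V) K) (depthBound vs T G)
      (MvPolynomial (V ⊕ V) K ⧸ vertexDeletionIdeal K (T : Set V) G) := by
  induction vs generalizing T G with
  | nil =>
    have hsimp (v : V) : IsSimplicialOutside T G v := (h v).resolve_left List.not_mem_nil
    rw [vertexDeletionIdeal_eq_cliqueIdeal hsimp]
    refine depthGE_cliqueIdeal subset_rfl ?_
    have hcard := card_cliqueMinima fun i hi j hj ↦ componentLabel_eq_iff_eq_or_adj hsimp hi hj
    rw [depthBound, hcard, ← Set.ncard_coe_finset Tᶜ, Finset.coe_compl]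
  | cons w vs ih =>
    rw [depthBound]
    split_ifs with hw
    · exact ih T G (mem_or_isSimplicialOutside_of_cons h hw fun _ ↦ id)
    have hwT : w ∉ T := fun hwT ↦ hw (.of_mem hwT)
    have hsub : (T : Set V) ⊆ (insert w T : Finset V) := by simp
    have hcomplete := ih T (completeAt G w)
      (mem_or_isSimplicialOutside_of_cons h .completeAt_self fun _ hv ↦ hv.completeAt hwT)
    have hdelete := ih (insert w T) G
      (mem_or_isSimplicialOutside_of_cons h (.of_mem (by simp)) fun _ hv ↦ hv.mono hsub)
    have hboth := ih (insert w T) (completeAt G w)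
      (mem_or_isSimplicialOutside_of_cons h (.of_mem (by simp))
        fun _ hv ↦ (hv.completeAt hwT).mono hsub)
    rw [Finset.coe_insert] at hdelete hboth
    rw [← vertexDeletionIdeal_completeAt_sup] at hboth
    rw [vertexDeletionIdeal_eq_inf _ G w]
    exact hcomplete.min_quotient_inf hdelete hboth

end DepthBound

section CutVertices

variable {V : Type*} {G : SimpleGraph V} {U : Set V} {i : V}

theorem reachable_induce_of_reachable_induce_insert
    (hi : ∀ j k (hj : j ∈ U) (hk : k ∈ U), G.Adj i j → G.Adj i k →
      (G.induce U).Reachable ⟨j, hj⟩ ⟨k, hk⟩) {a b : V} (ha : a ∈ U) (hb : b ∈ U)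
    (h : (G.induce (insert i U)).Reachable ⟨a, Or.inr ha⟩ ⟨b, Or.inr hb⟩) :
    (G.induce U).Reachable ⟨a, ha⟩ ⟨b, hb⟩ := by
  rw [SimpleGraph.reachable_iff_reflTransGen] at h
  suffices ∀ c : ↥(insert i U),
      Relation.ReflTransGen (G.induce (insert i U)).Adj ⟨a, Or.inr ha⟩ c →
        ∀ d (hd : d ∈ U), c = d ∨ (c = i ∧ G.Adj i d) → (G.induce U).Reachable ⟨a, ha⟩ ⟨d, hd⟩
    from this _ h b hb (Or.inl rfl)
  intro c hc
  induction hc with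
  | refl =>
    rintro d hd (rfl | ⟨hai, had⟩)
    · rfl
    · obtain rfl : i = a := hai.symm
      exact SimpleGraph.Adj.reachable (G := G.induce U) had
  | @tail c e _ hadj ih =>
    have hadj' : G.Adj c e := hadj
    rintro d hd (rfl | ⟨hei, hid⟩)
    · rcases c.2 with hci | hcU
      · exact ih e hd (Or.inr ⟨hci, by rwa [hci] at hadj'⟩)
      · exact (ih c hcU (Or.inl rfl)).trans (SimpleGraph.Adj.reachable (G := G.induce U) hadj)
    · rw [hei] at hadj'
      have hcU : (c : V) ∈ U := c.2.resolve_left hadj'.ne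
      exact (ih c hcU (Or.inl rfl)).trans (hi c d hcU hd hadj'.symm hid)

theorem card_connectedComponent_induce_insert_lt_iff [Finite V] :
    Nat.card (G.induce (insert i U)).ConnectedComponent < Nat.card (G.induce U).ConnectedComponent ↔
      ∃ j k, ∃ (hj : j ∈ U) (hk : k ∈ U), G.Adj i j ∧ G.Adj i k ∧
        ¬(G.induce U).Reachable ⟨j, hj⟩ ⟨k, hk⟩ := by
  have adj_reachable {a b : V} (ha : a ∈ insert i U) (hb : b ∈ insert i U) (hab : G.Adj a b) :
      (G.induce (insert i U)).Reachable ⟨a, ha⟩ ⟨b, hb⟩ :=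
    SimpleGraph.Adj.reachable (G := G.induce (insert i U)) hab
  let inclusion : (G.induce U).ConnectedComponent → (G.induce (insert i U)).ConnectedComponent :=
    SimpleGraph.ConnectedComponent.map (G.induceHomOfLE (Set.subset_insert i U)).toHom
  constructor
  · intro hlt
    by_contra! hreach
    refine hlt.not_ge (Nat.card_le_card_of_injective inclusion fun C D ↦ ?_)
    induction C, D using SimpleGraph.ConnectedComponent.ind₂ with | h a b
    intro hab
    exact SimpleGraph.ConnectedComponent.sound (reachable_induce_of_reachable_induce_insert hreach
      a.2 b.2 (SimpleGraph.ConnectedComponent.exact hab))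
  · rintro ⟨j, k, hj, hk, hij, hik, hjk⟩
    have hsurj : Function.Surjective inclusion := by
      intro C
      induction C using SimpleGraph.ConnectedComponent.ind with | h a
      rcases a with ⟨a, rfl | ha⟩
      · exact ⟨(G.induce U).connectedComponentMk ⟨j, hj⟩,
          SimpleGraph.ConnectedComponent.sound (adj_reachable (Or.inr hj) (Or.inl rfl) hij.symm)⟩
      · exact ⟨(G.induce U).connectedComponentMk ⟨a, ha⟩, rfl⟩
    refine (Nat.card_le_card_of_surjective inclusion hsurj).lt_of_ne fun hcard ↦ hjk ?_
    refine SimpleGraph.ConnectedComponent.exact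
      ((Function.Surjective.bijective_of_nat_card_le hsurj hcard.ge).1 ?_)
    exact SimpleGraph.ConnectedComponent.sound
      ((adj_reachable (Or.inr hj) (Or.inl rfl) hij.symm).trans
        (adj_reachable (Or.inl rfl) (Or.inr hk) hik))

end CutVertices

section MinimalPrimesOfBinomialEdgeIdeal

variable {K : Type*} [Field K]

theorem binomialEdgeIdeal_le_iff {V : Type*} {G : SimpleGraph V}
    {I : Ideal (MvPolynomial (V ⊕ V) K)} :
    binomialEdgeIdeal K G ≤ I ↔ ∀ i j, G.Adj i j → edgeMinor K i j ∈ I := by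
  simp [← vertexDeletionIdeal_empty, vertexDeletionIdeal_le_iff]

theorem edgeMinor_mem_trans {V : Type*} {Q : Ideal (MvPolynomial (V ⊕ V) K)} (hQ : Q.IsPrime)
    {i j k : V} (hj : ¬(X (Sum.inl j) ∈ Q ∧ X (Sum.inr j) ∈ Q)) (hij : edgeMinor K i j ∈ Q)
    (hjk : edgeMinor K j k ∈ Q) : edgeMinor K i k ∈ Q := by
  have hinl : X (Sum.inl j) * edgeMinor K i k =
      X (Sum.inl i) * edgeMinor K j k + X (Sum.inl k) * edgeMinor K i j := by
    simp only [edgeMinor]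
    ring
  have hinr : X (Sum.inr j) * edgeMinor K i k =
      X (Sum.inr i) * edgeMinor K j k + X (Sum.inr k) * edgeMinor K i j := by
    simp only [edgeMinor]
    ring
  by_contra hik
  refine hj ⟨(hQ.mem_or_mem (y := edgeMinor K i k) ?_).resolve_right hik,
    (hQ.mem_or_mem (y := edgeMinor K i k) ?_).resolve_right hik⟩
  · rw [hinl]
    exact add_mem (Ideal.mul_mem_left _ _ hjk) (Ideal.mul_mem_left _ _ hij)
  · rw [hinr]
    exact add_mem (Ideal.mul_mem_left _ _ hjk) (Ideal.mul_mem_left _ _ hij)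

variable {n : ℕ} {G : SimpleGraph (Fin n)} {T T' : Set (Fin n)}

theorem hasCutpointProperty_iff :
    HasCutpointProperty G T ↔ ∀ i ∈ T, ∃ j k, ∃ (hj : j ∈ Tᶜ) (hk : k ∈ Tᶜ), G.Adj i j ∧ G.Adj i k ∧
      ¬(G.induce Tᶜ).Reachable ⟨j, hj⟩ ⟨k, hk⟩ :=
  forall₂_congr fun i _ ↦ by
    rw [cNum, cNum, Set.union_singleton, card_connectedComponent_induce_insert_lt_iff]

theorem hasCutpointProperty_empty : HasCutpointProperty G ∅ :=
  fun _ hi ↦ absurd hi (Set.notMem_empty _)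

theorem PTIdeal_eq_cliqueIdeal : PTIdeal K G T = cliqueIdeal K T T (componentLabel G T) := by
  refine le_antisymm (Ideal.span_le.2 ?_) (cliqueIdeal_le_iff.2 ⟨?_, ?_, fun i j hi hj hij ↦ ?_⟩)
  · rintro f ((⟨i, hi, rfl⟩ | ⟨i, hi, rfl⟩) | ⟨i, j, hi, hj, -, hij, rfl⟩)
    exacts [X_inl_mem_cliqueIdeal hi, X_inr_mem_cliqueIdeal hi,
      edgeMinor_mem_cliqueIdeal hi hj ((componentLabel_eq_iff hi hj).2 hij)]
  · exact fun i hi ↦ Ideal.subset_span (Or.inl (Or.inl ⟨i, hi, rfl⟩))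
  · exact fun i hi ↦ Ideal.subset_span (Or.inl (Or.inr ⟨i, hi, rfl⟩))
  · rcases eq_or_ne i j with rfl | hne
    · simp [edgeMinor]
    · exact Ideal.subset_span
        (Or.inr ⟨i, j, hi, hj, hne, (componentLabel_eq_iff hi hj).1 hij, rfl⟩)

theorem PTIdeal_isPrime (G : SimpleGraph (Fin n)) (T : Set (Fin n)) : (PTIdeal K G T).IsPrime :=
  PTIdeal_eq_cliqueIdeal (K := K) (G := G) (T := T) ▸ cliqueIdeal_isPrime subset_rfl

theorem PTIdeal_le_iff {I : Ideal (MvPolynomial (Fin n ⊕ Fin n) K)} :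
    PTIdeal K G T ≤ I ↔ (∀ i ∈ T, X (Sum.inl i) ∈ I ∧ X (Sum.inr i) ∈ I) ∧
      ∀ i j (hi : i ∈ Tᶜ) (hj : j ∈ Tᶜ), (G.induce Tᶜ).Reachable ⟨i, hi⟩ ⟨j, hj⟩ →
        edgeMinor K i j ∈ I := by
  rw [PTIdeal_eq_cliqueIdeal, cliqueIdeal_le_iff, ← and_assoc, ← forall₂_and]
  exact and_congr_right fun _ ↦ forall₄_congr fun i j hi hj ↦ by rw [componentLabel_eq_iff hi hj]

theorem X_mem_PTIdeal {i : Fin n} (hi : i ∈ T) :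
    X (Sum.inl i) ∈ PTIdeal K G T ∧ X (Sum.inr i) ∈ PTIdeal K G T :=
  (PTIdeal_le_iff.1 le_rfl).1 i hi

theorem subset_of_PTIdeal_le_cliqueIdeal {ι : Type*} {c : Fin n → ι}
    (h : PTIdeal K G T ≤ cliqueIdeal K T' T' c) : T ⊆ T' :=
  fun _ hi ↦ (X_inl_mem_cliqueIdeal_iff subset_rfl).1 (h (X_mem_PTIdeal hi).1)

theorem edgeMinor_mem_PTIdeal_iff {i j : Fin n} (hi : i ∈ Tᶜ) (hj : j ∈ Tᶜ) :
    edgeMinor K i j ∈ PTIdeal K G T ↔ (G.induce Tᶜ).Reachable ⟨i, hi⟩ ⟨j, hj⟩ := by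
  rw [PTIdeal_eq_cliqueIdeal, edgeMinor_mem_cliqueIdeal_iff subset_rfl hi hj,
    componentLabel_eq_iff hi hj]

theorem binomialEdgeIdeal_le_PTIdeal : binomialEdgeIdeal K G ≤ PTIdeal K G T := by
  rw [← vertexDeletionIdeal_empty, PTIdeal_eq_cliqueIdeal]
  exact (vertexDeletionIdeal_mono (Set.empty_subset T) le_rfl).trans
    vertexDeletionIdeal_le_cliqueIdeal

theorem binomialEdgeIdeal_le_idealOfVars :
    binomialEdgeIdeal K G ≤ idealOfVars (Fin n ⊕ Fin n) K :=
  binomialEdgeIdeal_le_PTIdeal.trans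
    ((PTIdeal_eq_cliqueIdeal (T := ∅)).trans_le cliqueIdeal_le_idealOfVars)

theorem edgeMinor_mem_of_reachable_induce {Q : Ideal (MvPolynomial (Fin n ⊕ Fin n) K)}
    (hQ : Q.IsPrime) (hJ : binomialEdgeIdeal K G ≤ Q)
    (hT : ∀ i ∈ Tᶜ, ¬(X (Sum.inl i) ∈ Q ∧ X (Sum.inr i) ∈ Q)) {i j : ↥Tᶜ}
    (h : (G.induce Tᶜ).Reachable i j) : edgeMinor K (i : Fin n) j ∈ Q := by
  obtain ⟨walk⟩ := h
  induction walk with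
  | nil => simp [edgeMinor]
  | @cons i j k hij _ ih =>
    exact edgeMinor_mem_trans hQ (hT j j.2) (binomialEdgeIdeal_le_iff.1 hJ i j hij) ih

theorem exists_PTIdeal_le_of_isPrime {Q : Ideal (MvPolynomial (Fin n ⊕ Fin n) K)}
    (hQ : Q.IsPrime) (hJ : binomialEdgeIdeal K G ≤ Q) : ∃ T, PTIdeal K G T ≤ Q := by
  obtain ⟨T, hT⟩ : ∃ T : Set (Fin n), ∀ i, i ∈ T ↔ X (Sum.inl i) ∈ Q ∧ X (Sum.inr i) ∈ Q :=
    ⟨{i | X (Sum.inl i) ∈ Q ∧ X (Sum.inr i) ∈ Q}, by simp⟩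
  have hTcompl (i : Fin n) (hi : i ∈ Tᶜ) : ¬(X (Sum.inl i) ∈ Q ∧ X (Sum.inr i) ∈ Q) :=
    mt (hT i).2 hi
  exact ⟨T, PTIdeal_le_iff.2 ⟨fun i ↦ (hT i).1, fun _ _ _ _ ↦
    edgeMinor_mem_of_reachable_induce hQ hJ hTcompl⟩⟩

theorem PTIdeal_sdiff_singleton_le {i : Fin n}
    (hcut : ∀ j k (hj : j ∈ Tᶜ) (hk : k ∈ Tᶜ), G.Adj i j → G.Adj i k →
      (G.induce Tᶜ).Reachable ⟨j, hj⟩ ⟨k, hk⟩) :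
    PTIdeal K G (T \ {i}) ≤ PTIdeal K G T := by
  have hcompl : (T \ {i})ᶜ = insert i Tᶜ := by
    rw [Set.sdiff_eq, Set.compl_inter, compl_compl, Set.union_singleton]
  refine PTIdeal_le_iff.2 ⟨fun j hj ↦ X_mem_PTIdeal hj.1, fun a b ha hb hab ↦ ?_⟩
  by_cases haT : a ∈ T
  · exact edgeMinor_mem_of_X_mem (X_mem_PTIdeal haT).1 (X_mem_PTIdeal haT).2
  by_cases hbT : b ∈ T
  · rw [edgeMinor_swap]
    exact neg_mem (edgeMinor_mem_of_X_mem (X_mem_PTIdeal hbT).1 (X_mem_PTIdeal hbT).2)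
  refine (edgeMinor_mem_PTIdeal_iff haT hbT).2
    (reachable_induce_of_reachable_induce_insert hcut haT hbT ?_)
  exact hab.map (G.induceHomOfLE hcompl.le).toHom

theorem exists_hasCutpointProperty_PTIdeal_le {Q : Ideal (MvPolynomial (Fin n ⊕ Fin n) K)}
    (hQ : Q.IsPrime) (hJ : binomialEdgeIdeal K G ≤ Q) :
    ∃ T, HasCutpointProperty G T ∧ PTIdeal K G T ≤ Q := by
  obtain ⟨T, hTQ, hT⟩ := wellFounded_lt.has_min {T | PTIdeal K G T ≤ Q}
    (exists_PTIdeal_le_of_isPrime hQ hJ)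
  refine ⟨T, hasCutpointProperty_iff.2 fun i hi ↦ ?_, hTQ⟩
  by_contra! hcut
  exact hT (T \ {i}) ((PTIdeal_sdiff_singleton_le hcut).trans hTQ)
    (Set.sdiff_singleton_ssubset.2 hi)

theorem HasCutpointProperty.eq_of_PTIdeal_le (hT : HasCutpointProperty G T)
    (h : PTIdeal K G T' ≤ PTIdeal K G T) : T' = T := by
  have hsub : T' ⊆ T := subset_of_PTIdeal_le_cliqueIdeal (h.trans PTIdeal_eq_cliqueIdeal.le)
  refine hsub.antisymm fun i hi ↦ ?_
  by_contra hiT'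
  obtain ⟨j, k, hj, hk, hij, hik, hjk⟩ := hasCutpointProperty_iff.1 hT i hi
  refine hjk ((edgeMinor_mem_PTIdeal_iff (K := K) hj hk).1 (h ?_))
  have hreach {l : Fin n} (hl : l ∈ Tᶜ) (hil : G.Adj i l) :
      (G.induce T'ᶜ).Reachable ⟨i, hiT'⟩ ⟨l, fun hl' ↦ hl (hsub hl')⟩ :=
    SimpleGraph.Adj.reachable (G := G.induce T'ᶜ) hil
  exact (edgeMinor_mem_PTIdeal_iff _ _).2 ((hreach hj hij).symm.trans (hreach hk hik))

theorem minimalPrimes_binomialEdgeIdeal (K : Type*) [Field K] (G : SimpleGraph (Fin n)) :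
    (binomialEdgeIdeal K G).minimalPrimes = PTIdeal K G '' {T | HasCutpointProperty G T} := by
  ext P
  constructor
  · intro hP
    obtain ⟨T, hT, hle⟩ := exists_hasCutpointProperty_PTIdeal_le hP.1.1 hP.1.2
    exact ⟨T, hT, hle.antisymm (hP.2 ⟨PTIdeal_isPrime G T, binomialEdgeIdeal_le_PTIdeal⟩ hle)⟩
  · rintro ⟨T, hT, rfl⟩
    refine ⟨⟨PTIdeal_isPrime G T, binomialEdgeIdeal_le_PTIdeal⟩, fun Q hQ hQT ↦ ?_⟩
    obtain ⟨T', -, hle⟩ := exists_hasCutpointProperty_PTIdeal_le hQ.1 hQ.2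
    exact hT.eq_of_PTIdeal_le (hle.trans hQT) ▸ hle

end MinimalPrimesOfBinomialEdgeIdeal

section Dimension

theorem htI_le_height {R : Type*} [CommRing R] {I : Ideal R} {P : PrimeSpectrum R}
    (h : I ≤ P.asIdeal) : htI I ≤ Order.height P :=
  iInf₂_le P h

theorem htI_asIdeal {R : Type*} [CommRing R] (P : PrimeSpectrum R) :
    htI P.asIdeal = Order.height P :=
  le_antisymm (htI_le_height le_rfl) (le_iInf₂ fun _ hQ ↦ Order.height_mono hQ)

theorem ringKrullDim_quotient_eq_of_coheight {R : Type*} [CommRing R] {J : Ideal R} {d : ℕ∞}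
    {P : PrimeSpectrum R} (hJP : J ≤ P.asIdeal) (hP : Order.coheight P = d)
    (hd : ∀ Q : PrimeSpectrum R, J ≤ Q.asIdeal → Order.coheight Q ≤ d) :
    ringKrullDim (R ⧸ J) = d := by
  rw [ringKrullDim_quotient]
  apply le_antisymm
  · rw [Order.krullDim_eq_iSup_coheight]
    exact iSup_le fun Q ↦ WithBot.coe_le_coe.2
      ((Order.coheight_le_coheight_apply_of_strictMono Subtype.val (fun _ _ ↦ id) Q).trans
        (hd Q.1 Q.2))
  · rw [← hP, Order.coheight_eq_krullDim_Ici]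
    exact Order.krullDim_le_of_strictMono (fun Q ↦ ⟨Q.1, hJP.trans Q.2⟩) fun _ _ ↦ id

variable {K : Type*} [Field K] {n : ℕ} {G : SimpleGraph (Fin n)} {T : Set (Fin n)}

theorem height_and_coheight_PTIdeal {k : ℕ} (hk : k + cNum G Tᶜ = n + T.ncard) :
    Order.height (⟨PTIdeal K G T, PTIdeal_isPrime G T⟩ : PrimeSpectrum _) = k ∧
      Order.coheight (⟨PTIdeal K G T, PTIdeal_isPrime G T⟩ : PrimeSpectrum _) =
        (Tᶜ.ncard + cNum G Tᶜ : ℕ) := by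
  have hcNum : (componentLabel G T '' Tᶜ).ncard = cNum G Tᶜ := ncard_componentLabel_image G T
  have h := height_and_coheight_cliqueIdeal (K := K) (c := componentLabel G T) (A := T)
    subset_rfl (k := k) (by rw [hcNum, hk, Nat.card_fin])
  simp only [PTIdeal_eq_cliqueIdeal]
  rwa [hcNum] at h

variable {c : ℕ} (hC : ∀ T, HasCutpointProperty G T → cNum G Tᶜ = T.ncard + c)

include hC

theorem le_of_forall_cNum_compl_eq : c ≤ n := by
  have hc : cNum G ∅ᶜ = c := by simpa using hC ∅ hasCutpointProperty_empty
  rw [← hc]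
  calc cNum G ∅ᶜ ≤ Nat.card ↥(∅ᶜ : Set (Fin n)) :=
        Nat.card_le_card_of_surjective _ Quot.mk_surjective
    _ = n := by simp

theorem coheight_PTIdeal_of_hasCutpointProperty (hT : HasCutpointProperty G T) :
    Order.coheight (⟨PTIdeal K G T, PTIdeal_isPrime G T⟩ : PrimeSpectrum _) = (n + c : ℕ) := by
  have hc := le_of_forall_cNum_compl_eq hC
  rw [(height_and_coheight_PTIdeal (k := n - c) (by rw [hC T hT]; lia)).2, hC T hT, ← add_assoc,
    add_comm Tᶜ.ncard, Set.ncard_add_ncard_compl, Nat.card_fin]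

theorem ringKrullDim_quotient_binomialEdgeIdeal :
    ringKrullDim (MvPolynomial (Fin n ⊕ Fin n) K ⧸ binomialEdgeIdeal K G) = (n + c : ℕ) := by
  refine ringKrullDim_quotient_eq_of_coheight (d := (n + c : ℕ)) binomialEdgeIdeal_le_PTIdeal
    (coheight_PTIdeal_of_hasCutpointProperty hC hasCutpointProperty_empty) fun Q hQ ↦ ?_
  obtain ⟨T, hT, hle⟩ := exists_hasCutpointProperty_PTIdeal_le Q.2 hQ
  rw [← coheight_PTIdeal_of_hasCutpointProperty (K := K) hC hT]
  exact Order.coheight_anti hle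

theorem height_PTIdeal_of_hasCutpointProperty (hT : HasCutpointProperty G T) :
    Order.height (⟨PTIdeal K G T, PTIdeal_isPrime G T⟩ : PrimeSpectrum _) = (n - c : ℕ) := by
  have hc := le_of_forall_cNum_compl_eq hC
  exact (height_and_coheight_PTIdeal (by rw [hC T hT]; lia)).1

theorem htI_binomialEdgeIdeal : htI (binomialEdgeIdeal K G) = (n - c : ℕ) := by
  apply le_antisymm
  · rw [← height_PTIdeal_of_hasCutpointProperty (K := K) hC hasCutpointProperty_empty]
    exact htI_le_height binomialEdgeIdeal_le_PTIdeal
  · refine le_iInf₂ fun Q hQ ↦ ?_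
    obtain ⟨T, hT, hle⟩ := exists_hasCutpointProperty_PTIdeal_le Q.2 hQ
    rw [← height_PTIdeal_of_hasCutpointProperty (K := K) hC hT]
    exact Order.height_mono hle

theorem isUnmixed_binomialEdgeIdeal : IsUnmixed (binomialEdgeIdeal K G) := by
  intro P hP
  rw [minimalPrimes_binomialEdgeIdeal] at hP
  obtain ⟨T, hT, rfl⟩ := hP
  rw [htI_binomialEdgeIdeal hC, ← height_PTIdeal_of_hasCutpointProperty (K := K) hC hT]
  exact htI_asIdeal ⟨PTIdeal K G T, PTIdeal_isPrime G T⟩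

end Dimension

section DepthUpperBound

variable {K : Type*} [Field K] {n : ℕ} {G : SimpleGraph (Fin n)} {T : Set (Fin n)}

theorem compl_nonempty_of_hasCutpointProperty (hT : HasCutpointProperty G T) (hne : T.Nonempty) :
    Tᶜ.Nonempty :=
  have ⟨i, hi⟩ := hne
  have ⟨j, _, hj, _⟩ := hasCutpointProperty_iff.1 hT i hi
  ⟨j, hj⟩

theorem PTIdeal_empty_sup (hG : G.Preconnected) (T : Set (Fin n)) :
    PTIdeal K G ∅ ⊔ PTIdeal K G T = cliqueIdeal K T T fun _ ↦ () := by
  have hreach (i j : Fin n) (hi : i ∈ (∅ : Set (Fin n))ᶜ) (hj : j ∈ (∅ : Set (Fin n))ᶜ) :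
      (G.induce ∅ᶜ).Reachable ⟨i, hi⟩ ⟨j, hj⟩ :=
    (hG i j).map (⟨fun l ↦ ⟨l, Set.notMem_empty l⟩, id⟩ : G →g G.induce ∅ᶜ)
  refine le_antisymm (sup_le (PTIdeal_le_iff.2 ⟨by simp, fun i j _ _ _ ↦ ?_⟩) (PTIdeal_le_iff.2
    ⟨fun i hi ↦ ⟨X_inl_mem_cliqueIdeal hi, X_inr_mem_cliqueIdeal hi⟩,
      fun i j hi hj _ ↦ edgeMinor_mem_cliqueIdeal hi hj rfl⟩)) ?_
  · by_cases hi : i ∈ T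
    · exact edgeMinor_mem_of_X_mem (X_inl_mem_cliqueIdeal hi) (X_inr_mem_cliqueIdeal hi)
    by_cases hj : j ∈ T
    · rw [edgeMinor_swap]
      exact neg_mem (edgeMinor_mem_of_X_mem (X_inl_mem_cliqueIdeal hj) (X_inr_mem_cliqueIdeal hj))
    exact edgeMinor_mem_cliqueIdeal hi hj rfl
  · exact cliqueIdeal_le_iff.2 ⟨fun i hi ↦ Ideal.mem_sup_right (X_mem_PTIdeal hi).1,
      fun i hi ↦ Ideal.mem_sup_right (X_mem_PTIdeal hi).2,
      fun i j _ _ _ ↦ Ideal.mem_sup_left ((edgeMinor_mem_PTIdeal_iff _ _).2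
        (hreach i j (Set.notMem_empty i) (Set.notMem_empty j)))⟩

theorem coheight_PTIdeal_empty_sup (hG : G.Preconnected) (hT : Tᶜ.Nonempty)
    (hsup : (PTIdeal K G ∅ ⊔ PTIdeal K G T).IsPrime) :
    Order.coheight (⟨_, hsup⟩ : PrimeSpectrum _) = (Tᶜ.ncard + 1 : ℕ) := by
  have hcard : ((fun _ ↦ ()) '' Tᶜ).ncard = 1 := by rw [hT.image_const, Set.ncard_singleton]
  have h := (height_and_coheight_cliqueIdeal (K := K) (c := fun _ ↦ ()) (subset_refl T)
    (k := n + T.ncard - 1) (by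
      have := Set.ncard_add_ncard_compl T
      have := hT.ncard_pos
      rw [hcard, Nat.card_fin] at *
      lia)).2
  simp only [PTIdeal_empty_sup hG]
  rwa [hcard] at h

/-- The only components of `V(J_G)` that contain `V(P_∅) ∩ V(P_T)` are `V(P_∅)` and `V(P_T)`, and
this intersection has dimension `|Tᶜ| + 1`. -/
theorem ringDepth_quotient_binomialEdgeIdeal_le (hG : G.Preconnected)
    (hT : HasCutpointProperty G T) (hne : T.Nonempty)
    (hmin : ∀ T' ⊆ T, HasCutpointProperty G T' → T' = ∅ ∨ T' = T) :
    ringDepth (MvPolynomial (Fin n ⊕ Fin n) K ⧸ binomialEdgeIdeal K G)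
      (gradedMaxQuot (binomialEdgeIdeal K G)) ≤ (Tᶜ.ncard + 2 : ℕ) := by
  have hm := idealOfVars_isPrime (K := K) (V := Fin n)
  have hsup : (PTIdeal K G ∅ ⊔ PTIdeal K G T).IsPrime := by
    rw [PTIdeal_empty_sup hG]
    exact cliqueIdeal_isPrime subset_rfl
  have hsupm : PTIdeal K G ∅ ⊔ PTIdeal K G T ≤ idealOfVars (Fin n ⊕ Fin n) K :=
    (PTIdeal_empty_sup hG T).le.trans cliqueIdeal_le_idealOfVars
  have hrad : (binomialEdgeIdeal K G).IsRadical :=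
    vertexDeletionIdeal_empty (K := K) (G := G) ▸ isRadical_vertexDeletionIdeal ∅ G
  have hmem {T' : Set (Fin n)} (hT' : HasCutpointProperty G T') :
      PTIdeal K G T' ∈ (binomialEdgeIdeal K G).minimalPrimes := by
    rw [minimalPrimes_binomialEdgeIdeal]
    exact ⟨T', hT', rfl⟩
  have hne' : PTIdeal K G ∅ ≠ PTIdeal K G T := fun h ↦
    hne.ne_empty (hasCutpointProperty_empty.eq_of_PTIdeal_le h.ge)
  by_contra! hlt
  have hdepth : DepthGE (idealOfVars (Fin n ⊕ Fin n) K) (Tᶜ.ncard + 2 + 1)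
      (_ ⧸ binomialEdgeIdeal K G) :=
    (le_ringDepth_quotient_iff binomialEdgeIdeal_le_idealOfVars hm.ne_top).1
      (Order.add_one_le_of_lt hlt)
  have hle := hdepth.le_coheight_sup hrad (hmem hasCutpointProperty_empty) (hmem hT) hne' hsupm ?_
  · rw [coheight_PTIdeal_empty_sup hG (compl_nonempty_of_hasCutpointProperty hT hne),
      Nat.cast_le] at hle
    lia
  · intro Q hQ hQle
    rw [minimalPrimes_binomialEdgeIdeal] at hQ
    obtain ⟨T', hT', rfl⟩ := hQ
    have hsub := subset_of_PTIdeal_le_cliqueIdeal (hQle.trans (PTIdeal_empty_sup hG T).le)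
    exact (hmin T' hsub hT').imp (congrArg _) (congrArg _)

end DepthUpperBound

section Generators

theorem homogeneousComponent_mul_of_isHomogeneous {σ R : Type*} [CommSemiring R] {d : ℕ}
    {f : MvPolynomial σ R} (hf : f.IsHomogeneous d) (p : MvPolynomial σ R) :
    homogeneousComponent d (p * f) = C (constantCoeff p) * f := by
  conv_lhs => rw [← sum_homogeneousComponent p, Finset.sum_mul, map_sum]
  rw [Finset.sum_eq_single 0]
  · rw [homogeneousComponent_of_mem ((homogeneousComponent_isHomogeneous 0 p).mul hf),
      homogeneousComponent_zero, constantCoeff_eq, if_pos (zero_add d).symm]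
  · intro i _ hi
    rw [homogeneousComponent_of_mem ((homogeneousComponent_isHomogeneous i p).mul hf),
      if_neg (by lia)]
  · simp

theorem homogeneousComponent_mul_of_mem_span {σ R : Type*} [CommSemiring R] {d : ℕ}
    {s : Set (MvPolynomial σ R)} (hs : ∀ f ∈ s, f.IsHomogeneous d) {g : MvPolynomial σ R}
    (hg : g ∈ Ideal.span s) (p : MvPolynomial σ R) :
    homogeneousComponent d (p * g) = C (constantCoeff p) * homogeneousComponent d g := by
  induction hg using Submodule.span_induction generalizing p with
  | mem f hf =>
    rw [homogeneousComponent_mul_of_isHomogeneous (hs f hf), homogeneousComponent_eq_self (hs f hf)]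
  | zero => simp
  | add g₁ g₂ _ _ h₁ h₂ => rw [mul_add, map_add, h₁, h₂, map_add, mul_add]
  | smul q g _ h =>
    rw [smul_eq_mul, ← mul_assoc, h, h, ← mul_assoc, ← C_mul, map_mul]

theorem mu_span_range_eq_card {K σ ι : Type*} [Field K] [Fintype ι] {d : ℕ}
    {f : ι → MvPolynomial σ K} (hf : ∀ i, (f i).IsHomogeneous d) (hli : LinearIndependent K f) :
    mu (Ideal.span (Set.range f)) = Fintype.card ι := by
  classical
  have hcard : Fintype.card ι ∈ {k | ∃ s : Finset (MvPolynomial σ K), s.card = k ∧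
      Ideal.span (s : Set (MvPolynomial σ K)) = Ideal.span (Set.range f)} :=
    ⟨Finset.univ.image f, Finset.card_image_of_injective _ hli.injective, by simp⟩
  refine le_antisymm (Nat.sInf_le hcard) (le_csInf ⟨_, hcard⟩ ?_)
  rintro _ ⟨s, rfl, hs⟩
  have hspan (g) (hg : g ∈ Ideal.span (s : Set (MvPolynomial σ K))) :
      homogeneousComponent d g ∈ Submodule.span K (s.image (homogeneousComponent d) : Set _) := by
    induction hg using Submodule.span_induction with
    | mem g hg => exact Submodule.subset_span (Finset.mem_coe.2 (Finset.mem_image_of_mem _ hg))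
    | zero => simp
    | add g₁ g₂ _ _ h₁ h₂ => exact map_add (homogeneousComponent d) g₁ g₂ ▸ add_mem h₁ h₂
    | smul p g hg h =>
      rw [smul_eq_mul, homogeneousComponent_mul_of_mem_span (Set.forall_mem_range.2 hf)
        (hs.le hg), ← smul_eq_C_mul]
      exact Submodule.smul_mem _ _ h
  have hle : Set.range f ⊆
      Submodule.span K (s.image (homogeneousComponent d) : Set (MvPolynomial σ K)) := by
    rintro _ ⟨i, rfl⟩
    rw [← homogeneousComponent_eq_self (hf i)]
    exact hspan _ (hs.ge (Ideal.subset_span ⟨i, rfl⟩))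
  exact (linearIndependent_le_span_aux' f hli _ hle).trans
    ((Fintype.card_coe _).trans_le Finset.card_image_le)

variable {K : Type*} [Field K] {V : Type*}

theorem edgeMinor_isHomogeneous (i j : V) : (edgeMinor K i j).IsHomogeneous 2 :=
  ((isHomogeneous_X K _).mul (isHomogeneous_X K _)).sub
    ((isHomogeneous_X K _).mul (isHomogeneous_X K _))

theorem coeff_edgeMinor [DecidableEq V] (i j k l : V) :
    coeff (Finsupp.single (Sum.inl k) 1 + Finsupp.single (Sum.inr l) 1) (edgeMinor K i j) =
      (if (i, j) = (k, l) then 1 else 0) - if (j, i) = (k, l) then 1 else 0 := by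
  have hcoeff (i j : V) :
      coeff (Finsupp.single (Sum.inl k) 1 + Finsupp.single (Sum.inr l) 1)
        (X (Sum.inl i) * X (Sum.inr j) : MvPolynomial (V ⊕ V) K) =
          if (i, j) = (k, l) then 1 else 0 := by
    rw [X, X, monomial_mul, one_mul, coeff_monomial]
    simp [Finsupp.single_add_single_eq_single_add_single]
  rw [edgeMinor, coeff_sub, hcoeff, hcoeff]

theorem linearIndependent_edgeMinor {ι : Type*} {a b : ι → V} (hne : ∀ t, a t ≠ b t)
    (hinj : Function.Injective fun t ↦ s(a t, b t)) :
    LinearIndependent K fun t ↦ edgeMinor K (a t) (b t) := by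
  classical
  refine LinearIndependent.of_comp (LinearMap.pi fun t ↦ lcoeff K
    (Finsupp.single (Sum.inl (a t)) 1 + Finsupp.single (Sum.inr (b t)) 1)) ?_
  convert! Pi.linearIndependent_single_one ι K with t
  funext u
  have heq : (a t, b t) = (a u, b u) ↔ u = t :=
    ⟨fun h ↦ (hinj (congrArg (fun p ↦ s(p.1, p.2)) h)).symm, fun h ↦ by rw [h]⟩
  have hswap : (b t, a t) ≠ (a u, b u) := by
    intro h
    obtain rfl : t = u :=
      hinj (Sym2.eq_swap.trans (congrArg (fun p ↦ s(p.1, p.2)) h))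
    exact hne t (congrArg Prod.snd h)
  simp only [Function.comp_apply, LinearMap.pi_apply, lcoeff_apply, coeff_edgeMinor, heq,
    if_neg hswap, sub_zero, Pi.single_apply]

theorem binomialEdgeIdeal_eq_span_range {ι : Type*} {G : SimpleGraph V} {a b : ι → V}
    (h : Set.range (fun t ↦ s(a t, b t)) = G.edgeSet) :
    binomialEdgeIdeal K G = Ideal.span (Set.range fun t ↦ edgeMinor K (a t) (b t)) := by
  refine le_antisymm (binomialEdgeIdeal_le_iff.2 fun i j hij ↦ ?_) (Ideal.span_le.2 ?_)
  · have hmem (t : ι) : edgeMinor K (a t) (b t) ∈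
        Ideal.span (Set.range fun t ↦ edgeMinor K (a t) (b t)) := Ideal.subset_span ⟨t, rfl⟩
    obtain ⟨t, ht⟩ := h.ge (G.mem_edgeSet.2 hij)
    obtain ⟨rfl, rfl⟩ | ⟨rfl, rfl⟩ := Sym2.eq_iff.1 ht
    · exact hmem t
    · exact edgeMinor_swap (K := K) (b t) (a t) ▸ neg_mem (hmem t)
  · rintro _ ⟨t, rfl⟩
    exact binomialEdgeIdeal_le_iff.1 le_rfl _ _ (G.mem_edgeSet.1 (h.le ⟨t, rfl⟩))

theorem mu_binomialEdgeIdeal (K : Type*) [Field K] (G : SimpleGraph V) [Fintype G.edgeSet] :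
    mu (binomialEdgeIdeal K G) = G.edgeFinset.card := by
  obtain ⟨a, b, hab⟩ : ∃ a b : G.edgeSet → V, ∀ e, s(a e, b e) = e :=
    ⟨fun e ↦ (e : Sym2 V).out.1, fun e ↦ (e : Sym2 V).out.2, fun _ ↦ Quot.out_eq _⟩
  have hne (e : G.edgeSet) : a e ≠ b e := G.ne_of_adj (G.mem_edgeSet.1 ((hab e).symm ▸ e.2))
  have hinj : Function.Injective fun e ↦ s(a e, b e) := by
    simpa only [hab] using Subtype.val_injective
  rw [binomialEdgeIdeal_eq_span_range (a := a) (b := b) (by simp only [hab, Subtype.range_coe]),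
    mu_span_range_eq_card (fun _ ↦ edgeMinor_isHomogeneous _ _)
      (linearIndependent_edgeMinor hne hinj), SimpleGraph.edgeFinset_card]

end Generators

section ComputingComponents

variable {n : ℕ} {G : SimpleGraph (Fin n)} {T : Finset (Fin n)}

/-- The graph `G` with its vertices outside `T` completed in turn, so that the components of
`G - T` become cliques. It makes reachability in `G - T` decidable. -/
def componentCompletion (G : SimpleGraph (Fin n)) (T : Finset (Fin n)) : SimpleGraph (Fin n) :=
  completeAlong ((List.finRange n).filter (· ∉ T)) G

theorem reachable_induce_iff_componentCompletion {i j : Fin n} (hi : i ∈ (T : Set (Fin n))ᶜ)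
    (hj : j ∈ (T : Set (Fin n))ᶜ) : (G.induce (T : Set (Fin n))ᶜ).Reachable ⟨i, hi⟩ ⟨j, hj⟩ ↔
      i = j ∨ (componentCompletion G T).Adj i j :=
  reachable_induce_iff_completeAlong (by simp) hi hj

variable [DecidableRel G.Adj]

instance decidableRelComponentCompletionAdj : DecidableRel (componentCompletion G T).Adj :=
  inferInstanceAs (DecidableRel (completeAlong _ G).Adj)

instance decidableHasCutpointProperty : Decidable (HasCutpointProperty G (T : Set (Fin n))) :=
  decidable_of_iff (∀ i ∈ T, ∃ j k, j ∉ T ∧ k ∉ T ∧ G.Adj i j ∧ G.Adj i k ∧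
    ¬(j = k ∨ (componentCompletion G T).Adj j k)) <| by
  rw [hasCutpointProperty_iff]
  refine forall₂_congr fun i _ ↦ exists₂_congr fun j k ↦ ?_
  constructor
  · rintro ⟨hj, hk, hij, hik, hjk⟩
    exact ⟨hj, hk, hij, hik, mt (reachable_induce_iff_componentCompletion hj hk).1 hjk⟩
  · rintro ⟨hj, hk, hij, hik, hjk⟩
    exact ⟨hj, hk, hij, hik, mt (reachable_induce_iff_componentCompletion hj hk).2 hjk⟩

theorem cNum_compl_eq_card_cliqueMinima :
    cNum G (T : Set (Fin n))ᶜ = (cliqueMinima T (componentCompletion G T)).card := by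
  rw [cNum, ← ncard_componentLabel_image, card_cliqueMinima]
  exact fun i hi j hj ↦ (componentLabel_eq_iff hi hj).trans
    (reachable_induce_iff_componentCompletion hi hj)

end ComputingComponents

section NineVertexExample

instance decidableRelNineVertexExampleAdj : DecidableRel nineVertexExample.Adj :=
  fun a b ↦ inferInstanceAs (Decidable (a ≠ b ∧ (_ ∨ _)))

/-- The family `𝒞(G)` of `nineVertexExample`, as finsets of vertices. -/
def nineVertexCutpointSets : Finset (Finset (Fin 9)) :=
  {∅, {1}, {5}, {6}, {1, 5}, {1, 6}, {2, 4}, {2, 6}, {4, 5}, {5, 6}, {1, 2, 6}, {1, 3, 5},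
    {1, 3, 6}, {1, 4, 5}, {1, 5, 6}, {2, 4, 5}, {2, 4, 6}, {1, 3, 5, 6}}

set_option maxRecDepth 100000 in
theorem filter_hasCutpointProperty_nineVertexExample :
    ({T | HasCutpointProperty nineVertexExample T} : Finset (Finset (Fin 9))) =
      nineVertexCutpointSets := by
  decide +kernel

theorem hasCutpointProperty_nineVertexExample_iff {T : Finset (Fin 9)} :
    HasCutpointProperty nineVertexExample (T : Set (Fin 9)) ↔ T ∈ nineVertexCutpointSets := by
  simp [← filter_hasCutpointProperty_nineVertexExample]

theorem setOf_hasCutpointProperty_nineVertexExample :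
    {T : Set (Fin 9) | HasCutpointProperty nineVertexExample T} =
      ((↑) : Finset (Fin 9) → Set (Fin 9)) '' nineVertexCutpointSets := by
  ext T
  lift T to Finset (Fin 9) using T.toFinite
  simp [hasCutpointProperty_nineVertexExample_iff]

set_option maxRecDepth 100000 in
theorem card_cliqueMinima_nineVertexExample : ∀ T ∈ nineVertexCutpointSets,
    (cliqueMinima T (componentCompletion nineVertexExample T)).card = T.card + 1 := by
  decide +kernel

theorem cNum_compl_nineVertexExample (T : Set (Fin 9))
    (hT : HasCutpointProperty nineVertexExample T) :
    cNum nineVertexExample Tᶜ = T.ncard + 1 := by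
  lift T to Finset (Fin 9) using T.toFinite
  rw [cNum_compl_eq_card_cliqueMinima, Set.ncard_coe_finset, card_cliqueMinima_nineVertexExample T
    (hasCutpointProperty_nineVertexExample_iff.1 hT)]

set_option maxRecDepth 100000 in
theorem preconnected_nineVertexExample : nineVertexExample.Preconnected := by
  decide +kernel

theorem card_edgeFinset_nineVertexExample : nineVertexExample.edgeFinset.card = 10 := by
  decide +kernel

set_option maxRecDepth 100000 in
theorem le_depthBound_nineVertexExample :
    9 ≤ depthBound [0, 5, 4, 7, 6, 8, 2, 1, 3] ∅ nineVertexExample := by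
  decide +kernel

set_option maxRecDepth 100000 in
theorem eq_empty_or_eq_of_mem_nineVertexCutpointSets :
    ∀ T ∈ nineVertexCutpointSets, T ⊆ {2, 4} → T = ∅ ∨ T = {2, 4} := by
  decide +kernel

theorem eq_empty_or_eq_of_subset_two_four {T : Set (Fin 9)} (hsub : T ⊆ {2, 4})
    (hT : HasCutpointProperty nineVertexExample T) : T = ∅ ∨ T = {2, 4} := by
  lift T to Finset (Fin 9) using T.toFinite
  have hsub' : T ⊆ {2, 4} := by
    rw [← Finset.coe_subset]
    simpa using hsub
  obtain rfl | rfl := eq_empty_or_eq_of_mem_nineVertexCutpointSets T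
    (hasCutpointProperty_nineVertexExample_iff.1 hT) hsub'
  · exact Or.inl (by simp)
  · exact Or.inr (by simp)

theorem ringDepth_nineVertexExample_le (K : Type*) [Field K] :
    ringDepth (MvPolynomial (Fin 9 ⊕ Fin 9) K ⧸ binomialEdgeIdeal K nineVertexExample)
      (gradedMaxQuot (binomialEdgeIdeal K nineVertexExample)) ≤ 9 := by
  have hcut : HasCutpointProperty nineVertexExample {2, 4} := by
    have h := (hasCutpointProperty_nineVertexExample_iff (T := {2, 4})).2 (by decide)
    simpa using h
  have hcard : ({2, 4} : Set (Fin 9))ᶜ.ncard = 7 := by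
    rw [Set.ncard_compl, Set.ncard_pair (by decide), Nat.card_fin]
  have hle := ringDepth_quotient_binomialEdgeIdeal_le (K := K) preconnected_nineVertexExample hcut
    (Set.insert_nonempty _ _) fun _ ↦ eq_empty_or_eq_of_subset_two_four
  rwa [hcard] at hle

theorem le_ringDepth_nineVertexExample (K : Type*) [Field K] :
    9 ≤ ringDepth (MvPolynomial (Fin 9 ⊕ Fin 9) K ⧸ binomialEdgeIdeal K nineVertexExample)
      (gradedMaxQuot (binomialEdgeIdeal K nineVertexExample)) := by
  have hdepth := (depthGE_vertexDeletionIdeal (K := K) _ ∅ nineVertexExample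
    (fun v ↦ Or.inl (by revert v; decide))).mono le_depthBound_nineVertexExample
  rw [Finset.coe_empty, vertexDeletionIdeal_empty] at hdepth
  exact (le_ringDepth_quotient_iff (k := 9) binomialEdgeIdeal_le_idealOfVars
    idealOfVars_isPrime.ne_top).2 hdepth

theorem ringDepth_nineVertexExample (K : Type*) [Field K] :
    ringDepth (MvPolynomial (Fin 9 ⊕ Fin 9) K ⧸ binomialEdgeIdeal K nineVertexExample)
      (gradedMaxQuot (binomialEdgeIdeal K nineVertexExample)) = 9 :=
  (ringDepth_nineVertexExample_le K).antisymm (le_ringDepth_nineVertexExample K)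

theorem nineVertexExample_unmixed_not_CM_general (K : Type*) [Field K] :
    {T : Set (Fin 9) | HasCutpointProperty nineVertexExample T} =
      ({∅, {1}, {5}, {6}, {1, 5}, {1, 6}, {2, 4}, {2, 6}, {4, 5}, {5, 6},
        {1, 2, 6}, {1, 3, 5}, {1, 3, 6}, {1, 4, 5}, {1, 5, 6}, {2, 4, 5},
        {2, 4, 6}, {1, 3, 5, 6}} : Set (Set (Fin 9))) ∧
    IsUnmixed (binomialEdgeIdeal K nineVertexExample) ∧
    (mu (binomialEdgeIdeal K nineVertexExample) : ℕ∞) =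
      htI (binomialEdgeIdeal K nineVertexExample) + 2 ∧
    ringKrullDim (MvPolynomial (Fin 9 ⊕ Fin 9) K ⧸ binomialEdgeIdeal K nineVertexExample) = 10 ∧
    ringDepth (MvPolynomial (Fin 9 ⊕ Fin 9) K ⧸ binomialEdgeIdeal K nineVertexExample)
      (gradedMaxQuot (binomialEdgeIdeal K nineVertexExample)) = 9 ∧
    ¬ IsCMQuot (binomialEdgeIdeal K nineVertexExample) := by
  have hC := cNum_compl_nineVertexExample
  have hdim : ringKrullDim (MvPolynomial (Fin 9 ⊕ Fin 9) K ⧸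
      binomialEdgeIdeal K nineVertexExample) = 10 :=
    ringKrullDim_quotient_binomialEdgeIdeal hC
  refine ⟨?_, isUnmixed_binomialEdgeIdeal hC, ?_, hdim, ringDepth_nineVertexExample K,
    fun hCM ↦ ?_⟩
  · simp [setOf_hasCutpointProperty_nineVertexExample, nineVertexCutpointSets, Set.image_insert_eq]
  · rw [mu_binomialEdgeIdeal, card_edgeFinset_nineVertexExample, htI_binomialEdgeIdeal hC]
    norm_num
  · rw [IsCMQuot, ringDepth_nineVertexExample, hdim] at hCM
    exact absurd (WithBot.coe_inj.1 hCM : (9 : ℕ∞) = 10) (by decide)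

end NineVertexExample

/-- For the graph `G` above (over `K = ℚ`), `𝒞(G)` is the explicit
`18`-element family listed below, the ideal `J_G` is unmixed of deviation `2`,
`dim S/J_G = 10` and `depth S/J_G = 9`; in particular `S/J_G` is not
Cohen–Macaulay. -/
theorem nineVertexExample_unmixed_not_CM :
    {T : Set (Fin 9) | HasCutpointProperty nineVertexExample T} =
      ({∅, {1}, {5}, {6}, {1, 5}, {1, 6}, {2, 4}, {2, 6}, {4, 5}, {5, 6},
        {1, 2, 6}, {1, 3, 5}, {1, 3, 6}, {1, 4, 5}, {1, 5, 6}, {2, 4, 5},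
        {2, 4, 6}, {1, 3, 5, 6}} : Set (Set (Fin 9))) ∧
    IsUnmixed (binomialEdgeIdeal ℚ nineVertexExample) ∧
    (mu (binomialEdgeIdeal ℚ nineVertexExample) : ℕ∞) =
      htI (binomialEdgeIdeal ℚ nineVertexExample) + 2 ∧
    ringKrullDim (MvPolynomial (Fin 9 ⊕ Fin 9) ℚ ⧸ binomialEdgeIdeal ℚ nineVertexExample) = 10 ∧
    ringDepth (MvPolynomial (Fin 9 ⊕ Fin 9) ℚ ⧸ binomialEdgeIdeal ℚ nineVertexExample)
      (gradedMaxQuot (binomialEdgeIdeal ℚ nineVertexExample)) = 9 ∧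
    ¬ IsCMQuot (binomialEdgeIdeal ℚ nineVertexExample) :=
  nineVertexExample_unmixed_not_CM_general ℚ

end
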